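/- Let U be the product of a canonical form with T-count n ≥ 1, whose leftmost T-gate block has Clifford prefix M ∈ ℒℳ, and whose final Clifford element is C ∈ 𝒞. Then ρ_{2n}(Û₊₊) = ρ₀(M̂₊₊)·J₂·ρ₀(Ĉ₊₊) and ρ_{2n+1}(Û₋₊) = ρ₀(M̂₋₋)·J₁·ρ₀(Ĉ₊₊), where J₂ (respectively J₁) is the 4×4 matrix over ℤ/3ℤ whose (i,j) entry is 2 (respectively 1) when both i,j ∈ {2,3,4} and is 0 otherwise. -/

import Mathlib

open Matrix Complex

noncomputable section

/-- ω = exp(2πi/3), a primitive third root of unity. -/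
def ω : ℂ := exp (2 * Real.pi * I / 3)

/-- ζ = exp(2πi/9), a primitive ninth root of unity. -/
def ζ : ℂ := exp (2 * Real.pi * I / 9)

/-- The qutrit Pauli X matrix. -/
def Xmat : Matrix (Fin 3) (Fin 3) ℂ := !![0,0,1; 1,0,0; 0,1,0]

/-- The qutrit Pauli Z matrix. -/
def Zmat : Matrix (Fin 3) (Fin 3) ℂ := !![1,0,0; 0,ω,0; 0,0,ω^2]

/-- The qutrit Hadamard matrix H = (1/(i√3))·[[1,1,1],[1,ω,ω²],[1,ω²,ω]]. -/
def Hmat : Matrix (Fin 3) (Fin 3) ℂ :=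
  (I * (Real.sqrt 3 : ℂ))⁻¹ • !![1,1,1; 1,ω,ω^2; 1,ω^2,ω]

/-- The qutrit phase matrix S = ζ⁸·diag(1,1,ω). -/
def Smat : Matrix (Fin 3) (Fin 3) ℂ := ζ^8 • !![1,0,0; 0,1,0; 0,0,ω]

/-- The qutrit T matrix T = diag(1,ζ,ζ⁸). -/
def Tmat : Matrix (Fin 3) (Fin 3) ℂ := !![1,0,0; 0,ζ,0; 0,0,ζ^8]

lemma omega_ne_zero : ω ≠ 0 := Complex.exp_ne_zero _
lemma zeta_ne_zero : ζ ≠ 0 := Complex.exp_ne_zero _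

lemma omega_im_pos : 0 < ω.im := by
  have h : ω = Complex.exp ((2 * Real.pi / 3 : ℝ) * I) := by
    rw [ω]; push_cast; ring_nf
  rw [h, Complex.exp_ofReal_mul_I_im]
  apply Real.sin_pos_of_pos_of_lt_pi
  · positivity
  · nlinarith [Real.pi_pos]

lemma omega_ne_one : ω ≠ 1 := by
  intro h
  have := omega_im_pos
  rw [h] at this
  simp at this

lemma omega_cube : ω ^ 3 = 1 := by
  rw [ω, ← Complex.exp_nat_mul]
  rw [show (3:ℕ) * (2 * Real.pi * I / 3) = 2 * Real.pi * I by push_cast; ring]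
  exact Complex.exp_two_pi_mul_I

lemma detX : Xmat.det ≠ 0 := by
  simp [Xmat, Matrix.det_fin_three]

lemma detZ : Zmat.det ≠ 0 := by
  simp [Zmat, Matrix.det_fin_three, omega_ne_zero]

lemma detS : Smat.det ≠ 0 := by
  simp [Smat, Matrix.det_fin_three, omega_ne_zero, zeta_ne_zero]

lemma detT : Tmat.det ≠ 0 := by
  simp [Tmat, Matrix.det_fin_three, zeta_ne_zero]

lemma detH : Hmat.det ≠ 0 := by
  rw [Hmat, Matrix.det_smul]
  apply mul_ne_zero
  · apply pow_ne_zero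
    apply inv_ne_zero
    apply mul_ne_zero Complex.I_ne_zero
    simp [Complex.ofReal_ne_zero]
  · rw [Matrix.det_fin_three]
    simp [Matrix.vecHead, Matrix.vecTail]
    intro h
    have h3 : ω ^ 3 = 1 := omega_cube
    have key : 3 * ω * (ω - 1) = 0 := by linear_combination h + ω * h3
    rcases mul_eq_zero.mp key with h' | h'
    · rcases mul_eq_zero.mp h' with h'' | h''
      · norm_num at h''
      · exact omega_ne_zero h''
    · exact omega_ne_one (by linear_combination h')

/-- X as an element of GL(3, ℂ). -/
def Xg : GL (Fin 3) ℂ := Matrix.GeneralLinearGroup.mkOfDetNeZero Xmat detX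

/-- Z as an element of GL(3, ℂ). -/
def Zg : GL (Fin 3) ℂ := Matrix.GeneralLinearGroup.mkOfDetNeZero Zmat detZ

/-- H as an element of GL(3, ℂ). -/
def Hg : GL (Fin 3) ℂ := Matrix.GeneralLinearGroup.mkOfDetNeZero Hmat detH

/-- S as an element of GL(3, ℂ). -/
def Sg : GL (Fin 3) ℂ := Matrix.GeneralLinearGroup.mkOfDetNeZero Smat detS

/-- T as an element of GL(3, ℂ). -/
def Tg : GL (Fin 3) ℂ := Matrix.GeneralLinearGroup.mkOfDetNeZero Tmat detT

/-- The Clifford group 𝒞: the subgroup of GL(3,ℂ) generated by H and S. -/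
def Cliff : Subgroup (GL (Fin 3) ℂ) := Subgroup.closure {Hg, Sg}

/-- The Clifford+T group: the subgroup of GL(3,ℂ) generated by H, S and T. -/
def CliffT : Subgroup (GL (Fin 3) ℂ) := Subgroup.closure {Hg, Sg, Tg}

/-- The subgroup 𝒮 of GL(3,ℂ) generated by S and X. -/
def Sgrp : Subgroup (GL (Fin 3) ℂ) := Subgroup.closure {Sg, Xg}

/-- Letters of words over the alphabet {H, S, T}. -/
inductive Letter : Type
  | H : Letter
  | S : Letter
  | T : Letter
  deriving DecidableEq

/-- The gate associated to a letter. -/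
def Letter.g : Letter → GL (Fin 3) ℂ
  | .H => Hg
  | .S => Sg
  | .T => Tg

/-- The product of the letters of a word. -/
def wordProd (w : List Letter) : GL (Fin 3) ℂ := (w.map Letter.g).prod

/-- The allowed prefixes of a canonical form: ε, T, H²T. -/
def Prefixes : Set (List Letter) := {[], [.T], [.H, .H, .T]}

/-- The allowed syllables of a canonical form: HT, H³T, SHT, SH³T, S²HT, S²H³T. -/
def Syllables : Set (List Letter) :=
  {[.H, .T], [.H, .H, .H, .T], [.S, .H, .T],
   [.S, .H, .H, .H, .T], [.S, .S, .H, .T], [.S, .S, .H, .H, .H, .T]}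

/-- The T-count of a canonical form with prefix `p` and syllable list `ss`:
`k` if the prefix is empty and `k+1` otherwise, where `k` is the number of syllables. -/
def TCount (p : List Letter) (ss : List (List Letter)) : ℕ :=
  ss.length + (if p = [] then 0 else 1)

/-- P₊ = (P + P²)/√6. -/
def Pplus (P : Matrix (Fin 3) (Fin 3) ℂ) : Matrix (Fin 3) (Fin 3) ℂ :=
  ((Real.sqrt 6 : ℂ))⁻¹ • (P + P ^ 2)

/-- P₋ = i(P − P²)/√6. -/
def Pminus (P : Matrix (Fin 3) (Fin 3) ℂ) : Matrix (Fin 3) (Fin 3) ℂ :=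
  (I * ((Real.sqrt 6 : ℂ))⁻¹) • (P - P ^ 2)

/-- The ordered tuple (Q₁, …, Q₈) = (Z₊, X₊, (XZ)₊, (XZ²)₊, Z₋, X₋, (XZ)₋, (XZ²)₋). -/
def Q : Fin 8 → Matrix (Fin 3) (Fin 3) ℂ :=
  ![Pplus Zmat, Pplus Xmat, Pplus (Xmat * Zmat), Pplus (Xmat * Zmat ^ 2),
    Pminus Zmat, Pminus Xmat, Pminus (Xmat * Zmat), Pminus (Xmat * Zmat ^ 2)]

/-- The adjoint representation Û of U, the 8×8 real matrix with
entries Û_{ij} = tr(Qᵢ U Qⱼ U†). -/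
def adj (U : Matrix (Fin 3) (Fin 3) ℂ) : Matrix (Fin 8) (Fin 8) ℝ :=
  Matrix.of fun i j => (Matrix.trace (Q i * U * Q j * Uᴴ)).re

/-- The top-left 4×4 quadrant Û₊₊. -/
def blockPP (A : Matrix (Fin 8) (Fin 8) ℝ) : Matrix (Fin 4) (Fin 4) ℝ :=
  Matrix.of fun i j => A ⟨i.val, by omega⟩ ⟨j.val, by omega⟩

/-- The top-right 4×4 quadrant Û₊₋. -/
def blockPM (A : Matrix (Fin 8) (Fin 8) ℝ) : Matrix (Fin 4) (Fin 4) ℝ :=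
  Matrix.of fun i j => A ⟨i.val, by omega⟩ ⟨j.val + 4, by omega⟩

/-- The bottom-left 4×4 quadrant Û₋₊. -/
def blockMP (A : Matrix (Fin 8) (Fin 8) ℝ) : Matrix (Fin 4) (Fin 4) ℝ :=
  Matrix.of fun i j => A ⟨i.val + 4, by omega⟩ ⟨j.val, by omega⟩

/-- The bottom-right 4×4 quadrant Û₋₋. -/
def blockMM (A : Matrix (Fin 8) (Fin 8) ℝ) : Matrix (Fin 4) (Fin 4) ℝ :=
  Matrix.of fun i j => A ⟨i.val + 4, by omega⟩ ⟨j.val + 4, by omega⟩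

/-- α = sin(2π/9). -/
def αR : ℝ := Real.sin (2 * Real.pi / 9)

/-- The ring ℤ[α]: the subring of ℝ generated by 1/2 and α. -/
def Zα : Subring ℝ := Subring.closure {1/2, αR}

/-- The ring ℤ[1/2, 1/α]: the subring of ℝ generated by 1/2, α and α⁻¹. -/
def Zhα : Subring ℝ := Subring.closure {1/2, αR, αR⁻¹}

lemma alpha_mem_Zα : αR ∈ Zα := Subring.subset_closure (by simp)

/-- The set ℒℳ = {I, H, H², H³, SH, SH³, S²H, S²H³} of Clifford operators. -/
def LMset : Set (GL (Fin 3) ℂ) :=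
  {1, Hg, Hg ^ 2, Hg ^ 3, Sg * Hg, Sg * Hg ^ 3, Sg ^ 2 * Hg, Sg ^ 2 * Hg ^ 3}

/-- The residue ρ_k of a real number x (with ρ : ℤ[α] → ℤ/3ℤ the residue map):
ρ(α^k·x) when α^k·x ∈ ℤ[α], and junk value 0 otherwise. -/
def resEntry (ρ : Zα →+* ZMod 3) (k : ℕ) (x : ℝ) : ZMod 3 :=
  @dite _ (αR ^ k * x ∈ Zα) (Classical.dec _) (fun h => ρ (⟨αR ^ k * x, h⟩ : Zα)) (fun _ => 0)

/-- The k-residue ρ_k of a 4×4 real matrix, computed entrywise. -/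
def resMat (ρ : Zα →+* ZMod 3) (k : ℕ) (A : Matrix (Fin 4) (Fin 4) ℝ) :
    Matrix (Fin 4) (Fin 4) (ZMod 3) :=
  Matrix.of fun i j => resEntry ρ k (A i j)

/-- The matrix J₁ over ℤ/3ℤ with (i,j) entry 1 when i,j ∈ {2,3,4} and 0 otherwise. -/
def J1 : Matrix (Fin 4) (Fin 4) (ZMod 3) :=
  Matrix.of fun i j => if i ≠ 0 ∧ j ≠ 0 then 1 else 0

/-- The matrix J₂ over ℤ/3ℤ with (i,j) entry 2 when i,j ∈ {2,3,4} and 0 otherwise. -/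
def J2 : Matrix (Fin 4) (Fin 4) (ZMod 3) :=
  Matrix.of fun i j => if i ≠ 0 ∧ j ≠ 0 then 2 else 0


/-! ### Cyclotomic facts -/

/-- y = 2 sin(2π/9). -/
def yR : ℝ := 2 * αR

lemma zeta_cube : ζ ^ 3 = ω := by
  rw [ζ, ω, ← Complex.exp_nat_mul]
  congr 1
  push_cast; ring

lemma zeta_six : ζ ^ 6 = -ζ ^ 3 - 1 := by
  have h3 : ω ^ 3 = 1 := omega_cube
  have h : (ω - 1) * (ω ^ 2 + ω + 1) = 0 := by linear_combination h3
  rcases mul_eq_zero.mp h with h | h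
  · exact absurd (sub_eq_zero.mp h) omega_ne_one
  · rw [← zeta_cube] at h
    linear_combination h

lemma zeta_eq : ζ = (Real.cos (2 * Real.pi / 9) : ℂ) + (αR : ℂ) * I := by
  rw [ζ, αR, show (2 * Real.pi * I / 9 : ℂ) = ((2 * Real.pi / 9 : ℝ) : ℂ) * I by push_cast; ring,
    Complex.exp_mul_I, Complex.ofReal_cos, Complex.ofReal_sin]

lemma conj_zeta : (starRingEnd ℂ) ζ = ζ ^ 8 := by
  have h9 : ζ ^ 9 = 1 := by linear_combination (ζ ^ 3 - 1) * zeta_six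
  have h : ζ * (starRingEnd ℂ) ζ = 1 := by
    rw [Complex.mul_conj, zeta_eq, Complex.normSq_add_mul_I, αR, Real.cos_sq_add_sin_sq]
    simp
  linear_combination ζ ^ 8 * h - (starRingEnd ℂ) ζ * h9

lemma yC : (yR : ℂ) = -I * (ζ - ζ ^ 8) := by
  rw [← conj_zeta, zeta_eq, yR]
  simp only [map_add, map_mul, Complex.conj_ofReal, Complex.conj_I]
  push_cast
  linear_combination (2 * (αR : ℂ)) * Complex.I_sq

lemma hy : yR ^ 6 - 6 * yR ^ 4 + 9 * yR ^ 2 - 3 = 0 := by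
  have h : ((yR ^ 6 - 6 * yR ^ 4 + 9 * yR ^ 2 - 3 : ℝ) : ℂ) = 0 := by
    push_cast
    rw [yC]
    have h2 := Complex.I_sq
    have h6 := zeta_six
    grind
  exact_mod_cast h

lemma sqrt3 : (Real.sqrt 3 : ℂ) = -I * (ζ ^ 3 - ζ ^ 6) := by
  have h : (Real.sqrt 3) = yR * (3 - yR ^ 2) := by
    rw [Real.sqrt_eq_iff_mul_self_eq (by norm_num)]
    · linear_combination -hy
    · have h1 : 0 < αR := by
        apply Real.sin_pos_of_pos_of_lt_pi
        · positivity
        · nlinarith [Real.pi_pos]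
      have h2 : αR ≤ 1 := Real.sin_le_one _
      have h3 : αR ^ 2 ≤ 3/4 := by
        have : αR ≤ Real.sin (Real.pi / 3) := by
          apply Real.sin_le_sin_of_le_of_le_pi_div_two <;> linarith [Real.pi_pos]
        rw [Real.sin_pi_div_three] at this
        have h5 : αR ^ 2 ≤ (Real.sqrt 3 / 2) ^ 2 := pow_le_pow_left₀ h1.le this 2
        rw [div_pow, Real.sq_sqrt (by norm_num)] at h5
        linarith
      apply mul_nonneg
      · rw [yR]; linarith
      · rw [yR]; linarith
  rw [h]
  push_cast
  rw [yC]
  have h2 := Complex.I_sq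
  have h6 := zeta_six
  grind

lemma Hscal : (I * (Real.sqrt 3 : ℂ))⁻¹ = -(ζ ^ 3 - ζ ^ 6) / 3 := by
  rw [sqrt3]
  have h6 := zeta_six
  have h2 := Complex.I_sq
  apply inv_eq_of_mul_eq_one_right
  grind

/-! ### The adjoint representation through its action on the basis `Q` -/

/-- `A` represents conjugation by `U` in the basis `Q`. -/
def CRep (U : Matrix (Fin 3) (Fin 3) ℂ) (A : Matrix (Fin 8) (Fin 8) ℝ) : Prop :=
  ∀ j, U * Q j * Uᴴ = ∑ i, (A i j : ℂ) • Q i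

lemma CRep.mul {U V : Matrix (Fin 3) (Fin 3) ℂ} {A B : Matrix (Fin 8) (Fin 8) ℝ}
    (hU : CRep U A) (hV : CRep V B) : CRep (U * V) (A * B) := by
  intro j
  have h1 : U * V * Q j * (U * V)ᴴ = U * (V * Q j * Vᴴ) * Uᴴ := by
    rw [Matrix.conjTranspose_mul]; simp only [Matrix.mul_assoc]
  rw [h1, hV j, Matrix.mul_sum, Matrix.sum_mul]
  simp only [Matrix.mul_smul, Matrix.smul_mul, hU _, Finset.smul_sum, smul_smul]
  rw [Finset.sum_comm]
  refine Finset.sum_congr rfl fun i _ => ?_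
  rw [← Finset.sum_smul, Matrix.mul_apply]
  congr 1
  push_cast
  exact Finset.sum_congr rfl fun k _ => mul_comm _ _

lemma CRep.one : CRep 1 1 := by
  intro j
  simp [Matrix.one_apply]

/-- The basis `Q` without its normalisation, with entries written through `ζ`. -/
def q : Fin 8 → Matrix (Fin 3) (Fin 3) ℂ :=
  ![!![2,0,0; 0,-1,0; 0,0,-1],
    !![0,1,1; 1,0,1; 1,1,0],
    !![0,1,ζ^6; 1,0,ζ^6; ζ^3,ζ^3,0],
    !![0,1,ζ^3; 1,0,ζ^3; ζ^6,ζ^6,0],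
    !![0,0,0; 0,I*(ζ^3-ζ^6),0; 0,0,I*(ζ^6-ζ^3)],
    !![0,-I,I; I,0,-I; -I,I,0],
    !![0,-I,I*ζ^6; I,0,-(I*ζ^6); -(I*ζ^3),I*ζ^3,0],
    !![0,-I,I*ζ^3; I,0,-(I*ζ^3); -(I*ζ^6),I*ζ^6,0]]

set_option maxHeartbeats 8000000 in
lemma Q_eq (i : Fin 8) : Q i = ((Real.sqrt 6 : ℂ))⁻¹ • q i := by
  have h6 := zeta_six
  fin_cases i <;>
    simp [Q, q, Pplus, Pminus, Xmat, Zmat, sq,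
      ← zeta_cube] <;>
    (try constructorm* _ ∧ _) <;>
    first | (funext a; fin_cases a <;> rfl) | grind

/-- The adjoint representation of `H`. -/
def Hhat : Matrix (Fin 8) (Fin 8) ℝ :=
  !![0,1,0,0, 0,0,0,0;
     1,0,0,0, 0,0,0,0;
     0,0,0,-1/2, 0,0,0,-(yR*(3-yR^2)/2);
     0,0,1,0, 0,0,0,0;
     0,0,0,0, 0,1,0,0;
     0,0,0,0, -1,0,0,0;
     0,0,0,yR*(3-yR^2)/2, 0,0,0,-1/2;
     0,0,0,0, 0,0,-1,0]

/-- The adjoint representation of `S`. -/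
def Shat : Matrix (Fin 8) (Fin 8) ℝ :=
  !![1,0,0,0, 0,0,0,0;
     0,0,0,1, 0,0,0,0;
     0,1,0,0, 0,0,0,0;
     0,0,1,0, 0,0,0,0;
     0,0,0,0, 1,0,0,0;
     0,0,0,0, 0,0,0,1;
     0,0,0,0, 0,1,0,0;
     0,0,0,0, 0,0,1,0]

/-- First real coefficient of the adjoint representation of `T`. -/
def tA : ℝ := -1 + 3/2 * yR^2 - 1/3 * yR^4
/-- Second real coefficient of the adjoint representation of `T`. -/
def tB : ℝ := -1/2 * yR^2 + 1/6 * yR^4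
/-- Third real coefficient of the adjoint representation of `T`. -/
def tD : ℝ := yR * (1 - 5/6 * yR^2 + 1/6 * yR^4)
/-- Fourth real coefficient of the adjoint representation of `T`. -/
def tE : ℝ := yR * (-3/2 + 5/3 * yR^2 - 1/3 * yR^4)

/-- The adjoint representation of `T`. -/
def That : Matrix (Fin 8) (Fin 8) ℝ :=
  !![1,0,0,0, 0,0,0,0;
     0,tA,tA,tB, 0,-tD,-tD,-tE;
     0,tB,tA,tA, 0,-tE,-tD,-tD;
     0,tA,tB,tA, 0,-tD,-tE,-tD;
     0,0,0,0, 1,0,0,0;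
     0,tD,tD,tE, 0,tA,tA,tB;
     0,tE,tD,tD, 0,tB,tA,tA;
     0,tD,tE,tD, 0,tA,tB,tA]

lemma CRep_of_q {U : Matrix (Fin 3) (Fin 3) ℂ} {A : Matrix (Fin 8) (Fin 8) ℝ}
    (h : ∀ j, U * q j * Uᴴ = ∑ i, (A i j : ℂ) • q i) : CRep U A := by
  intro j
  simp only [Q_eq, Matrix.mul_smul, Matrix.smul_mul, h j, Finset.smul_sum]
  exact Finset.sum_congr rfl fun i _ => smul_comm _ _ _

set_option maxHeartbeats 8000000 in
lemma CRep_S : CRep Smat Shat := by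
  apply CRep_of_q
  have hS : Smat = !![ζ^8,0,0; 0,ζ^8,0; 0,0,ζ^8 * ζ^3] := by
    rw [Smat, ← zeta_cube]; ext a b; fin_cases a <;> fin_cases b <;> simp
  have hS' : Smatᴴ = !![ζ,0,0; 0,ζ,0; 0,0,ζ*ζ^6] := by
    have h6 := zeta_six
    rw [hS]; ext a b; fin_cases a <;> fin_cases b <;> simp [conj_zeta] <;> grind
  rw [hS', hS]
  have h6 := zeta_six
  intro j
  fin_cases j <;>
    simp [Fin.sum_univ_eight, q, Shat] <;>
    (try constructorm* _ ∧ _) <;>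
    first | (funext a; fin_cases a <;> rfl) | grind

set_option maxHeartbeats 8000000 in
lemma CRep_T : CRep Tmat That := by
  apply CRep_of_q
  have h6 := zeta_six
  have hS' : Tmatᴴ = !![1,0,0; 0,ζ^8,0; 0,0,ζ] := by
    rw [Tmat]; ext a b; fin_cases a <;> fin_cases b <;> simp [conj_zeta] <;> grind
  have h2 := Complex.I_sq
  have hA : (tA : ℂ) = (ζ - ζ ^ 2 - ζ ^ 4 - 2 * ζ ^ 5) / 6 := by
    rw [tA]; push_cast; rw [yC]; grind
  have hB : (tB : ℂ) = (ζ - ζ ^ 2 + 2 * ζ ^ 4 + ζ ^ 5) / 6 := by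
    rw [tB]; push_cast; rw [yC]; grind
  have hD : (tD : ℂ) = I * (-ζ - ζ ^ 2 + ζ ^ 4 - 2 * ζ ^ 5) / 6 := by
    rw [tD]; push_cast; rw [yC]; grind
  have hE : (tE : ℂ) = I * (-ζ - ζ ^ 2 - 2 * ζ ^ 4 + ζ ^ 5) / 6 := by
    rw [tE]; push_cast; rw [yC]; grind
  rw [hS', Tmat]
  intro j
  fin_cases j <;>
    simp [Fin.sum_univ_eight, q, That, hA, hB, hD, hE] <;>
    (try constructorm* _ ∧ _) <;>
    first | (funext a; fin_cases a <;> rfl) | grind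

set_option maxHeartbeats 8000000 in
lemma CRep_H : CRep Hmat Hhat := by
  apply CRep_of_q
  have h6 := zeta_six
  have h2 := Complex.I_sq
  have hH : Hmat = (-(ζ ^ 3 - ζ ^ 6) / 3) • !![1,1,1; 1,ζ^3,ζ^6; 1,ζ^6,ζ^3] := by
    rw [Hmat, Hscal, ← zeta_cube, ← pow_mul]
  have hH' : Hmatᴴ = ((ζ ^ 3 - ζ ^ 6) / 3) • !![1,1,1; 1,ζ^6,ζ^3; 1,ζ^3,ζ^6] := by
    rw [hH]; ext a b; fin_cases a <;> fin_cases b <;> simp [conj_zeta] <;> grind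
  have hs : ((yR : ℂ) * (3 - yR ^ 2)) = -I * (ζ ^ 3 - ζ ^ 6) := by
    rw [yC]; grind
  have hc : ((ζ ^ 3 - ζ ^ 6) / 3) * (-(ζ ^ 3 - ζ ^ 6) / 3) = 1 / 3 := by grind
  rw [hH', hH]
  intro j
  rw [Matrix.smul_mul, Matrix.smul_mul, Matrix.mul_smul, smul_smul, mul_comm (-(ζ ^ 3 - ζ ^ 6) / 3), hc]
  fin_cases j <;>
    simp [Fin.sum_univ_eight, q, Hhat, hs] <;>
    (try constructorm* _ ∧ _) <;>
    first | (funext a; fin_cases a <;> rfl) | grind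

set_option maxHeartbeats 8000000 in
lemma q_orth (i j : Fin 8) : Matrix.trace (q i * q j) = if i = j then 6 else 0 := by
  have h6 := zeta_six
  have h2 := Complex.I_sq
  fin_cases i <;> fin_cases j <;>
    simp [q, Matrix.trace, Matrix.mul_apply, Fin.sum_univ_three] <;> grind

lemma Q_orth (i j : Fin 8) : Matrix.trace (Q i * Q j) = if i = j then 1 else 0 := by
  have h : ((Real.sqrt 6 : ℂ)) ^ 2 = 6 := by
    rw [← Complex.ofReal_pow, Real.sq_sqrt (by norm_num)]; norm_num
  have h' : ((Real.sqrt 6 : ℂ))⁻¹ * ((Real.sqrt 6 : ℂ))⁻¹ = 6⁻¹ := by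
    rw [← mul_inv, ← sq, h]
  rw [Q_eq, Q_eq, Matrix.smul_mul, Matrix.mul_smul, smul_smul, h', Matrix.trace_smul, q_orth]
  split_ifs <;> simp

lemma CRep.adj_eq {U : Matrix (Fin 3) (Fin 3) ℂ} {A : Matrix (Fin 8) (Fin 8) ℝ}
    (h : CRep U A) : adj U = A := by
  ext i j
  rw [adj, Matrix.of_apply, Matrix.mul_assoc (Q i), Matrix.mul_assoc (Q i), h j, Matrix.mul_sum,
    Matrix.trace_sum]
  simp [Matrix.mul_smul, Matrix.trace_smul, Q_orth]

/-! ### Residues and the invariant lattice -/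

lemma yR_mem : yR ∈ Zα := by
  rw [yR, two_mul]; exact add_mem alpha_mem_Zα alpha_mem_Zα

/-- `y` as an element of ℤ[α]. -/
def yZ : Zα := ⟨yR, yR_mem⟩

/-- `1/2` as an element of ℤ[α]. -/
def hf : Zα := ⟨1/2, Subring.subset_closure (by simp)⟩

lemma yZ_coe : (yZ : ℝ) = yR := rfl
lemma hf_coe : (hf : ℝ) = 1/2 := rfl

lemma Za_num :
    ((2 : Zα) : ℝ) = 2 ∧ ((3 : Zα) : ℝ) = 3 ∧ ((4 : Zα) : ℝ) = 4 ∧ ((5 : Zα) : ℝ) = 5 ∧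
    ((6 : Zα) : ℝ) = 6 ∧ ((7 : Zα) : ℝ) = 7 ∧ ((8 : Zα) : ℝ) = 8 ∧ ((9 : Zα) : ℝ) = 9 ∧
    ((10 : Zα) : ℝ) = 10 ∧ ((11 : Zα) : ℝ) = 11 ∧ ((13 : Zα) : ℝ) = 13 ∧ ((15 : Zα) : ℝ) = 15 ∧
    ((17 : Zα) : ℝ) = 17 ∧ ((18 : Zα) : ℝ) = 18 ∧ ((21 : Zα) : ℝ) = 21 ∧ ((22 : Zα) : ℝ) = 22 ∧
    ((23 : Zα) : ℝ) = 23 ∧ ((24 : Zα) : ℝ) = 24 ∧ ((27 : Zα) : ℝ) = 27 ∧ ((29 : Zα) : ℝ) = 29 ∧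
    ((31 : Zα) : ℝ) = 31 ∧ ((33 : Zα) : ℝ) = 33 ∧ ((39 : Zα) : ℝ) = 39 ∧ ((41 : Zα) : ℝ) = 41 ∧
    ((81 : Zα) : ℝ) = 81 := by
  refine ⟨?_, ?_, ?_, ?_, ?_, ?_, ?_, ?_, ?_, ?_, ?_, ?_, ?_, ?_, ?_, ?_, ?_, ?_, ?_, ?_, ?_, ?_,
    ?_, ?_, ?_⟩ <;> exact map_ofNat Zα.subtype _

lemma rho_y (ρ : Zα →+* ZMod 3) (hρ : ρ (⟨αR, alpha_mem_Zα⟩ : Zα) = 0) : ρ yZ = 0 := by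
  have : yZ = 2 * (⟨αR, alpha_mem_Zα⟩ : Zα) := by
    apply Subtype.ext; push_cast; rfl
  rw [this, map_mul, hρ, mul_zero]

lemma rho_hf (ρ : Zα →+* ZMod 3) : ρ hf = 2 := by
  have h : hf + hf = 1 := by
    apply Subtype.ext; push_cast; rw [hf_coe]; norm_num
  have h2 := congrArg ρ h
  rw [map_add, map_one] at h2
  revert h2
  generalize ρ hf = t
  revert t
  decide

/-- Membership in the invariant lattice, with residue `r`. -/
def InvV (ρ : Zα →+* ZMod 3) (r : ZMod 3) (v : Fin 8 → ℝ) : Prop :=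
  ∃ w0 w1 w2 w3 w4 w5 w6 w7 : Zα, ρ w2 = r ∧
    v 0 = yR^2 * (w0:ℝ) ∧
    v 1 = (w2:ℝ) + yR^2 * (w5:ℝ) ∧
    v 2 = -yR^2 * (w1:ℝ) + (w2:ℝ) + -yR^2 * (w3:ℝ) + yR^2 * (w5:ℝ) + yR^4 * (w6:ℝ) ∧
    v 3 = yR^2 * (w1:ℝ) + (1 + -yR^2) * (w2:ℝ) + yR^2 * (w3:ℝ) + yR^2 * (w5:ℝ) + yR^4 * (w7:ℝ) ∧
    yR * v 4 = yR^2 * (w1:ℝ) ∧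
    yR * v 5 = (w2:ℝ) ∧
    yR * v 6 = yR^2 * (w1:ℝ) + (w2:ℝ) + yR^4 * (w3:ℝ) ∧
    yR * v 7 = -yR^2 * (w1:ℝ) + (1 + yR^4) * (w2:ℝ) + -yR^4 * (w3:ℝ) + yR^6 * (w4:ℝ)

lemma H_apply (v : Fin 8 → ℝ) : Hhat *ᵥ v =
    ![v 1,
      v 0,
      -1/2 * v 3 - yR*(3-yR^2)/2 * v 7,
      v 2,
      v 5,
      -v 4,
      yR*(3-yR^2)/2 * v 3 - 1/2 * v 7,
      -v 6] := by
  ext i; fin_cases i <;> simp [Hhat, Matrix.mulVec, dotProduct, Fin.sum_univ_eight] <;> ring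

lemma S_apply (v : Fin 8 → ℝ) : Shat *ᵥ v =
    ![v 0,
      v 3,
      v 1,
      v 2,
      v 4,
      v 7,
      v 5,
      v 6] := by
  ext i; fin_cases i <;> simp [Shat, Matrix.mulVec, dotProduct, Fin.sum_univ_eight] <;> ring

lemma T_apply (v : Fin 8 → ℝ) : That *ᵥ v =
    ![v 0,
      tA * v 1 + tA * v 2 + tB * v 3 - tD * v 5 - tD * v 6 - tE * v 7,
      tB * v 1 + tA * v 2 + tA * v 3 - tE * v 5 - tD * v 6 - tD * v 7,
      tA * v 1 + tB * v 2 + tA * v 3 - tD * v 5 - tE * v 6 - tD * v 7,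
      v 4,
      tD * v 1 + tD * v 2 + tE * v 3 + tA * v 5 + tA * v 6 + tB * v 7,
      tE * v 1 + tD * v 2 + tD * v 3 + tB * v 5 + tA * v 6 + tA * v 7,
      tD * v 1 + tE * v 2 + tD * v 3 + tA * v 5 + tB * v 6 + tA * v 7] := by
  ext i; fin_cases i <;> simp [That, Matrix.mulVec, dotProduct, Fin.sum_univ_eight] <;> ring

/-- The lattice is stable under `S`. -/
lemma inv_S (ρ : Zα →+* ZMod 3) (hρ : ρ (⟨αR, alpha_mem_Zα⟩ : Zα) = 0)
    (r : ZMod 3) (v : Fin 8 → ℝ) (h : InvV ρ r v) :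
    InvV ρ r (Shat *ᵥ v) := by
  obtain ⟨w0, w1, w2, w3, w4, w5, w6, w7, hr, h0, h1, h2, h3, h4, h5, h6, h7⟩ := h
  have hY := rho_y ρ hρ
  have hH := rho_hf ρ
  have hyy := hy
  refine ⟨w0,
    w1,
    -yZ^2 * w1 + (1 + yZ^4) * w2 + -yZ^4 * w3 + (3 + (-9)*yZ^2 + 6*yZ^4) * w4,
    (-1) * w2 + w3 + -yZ^2 * w4,
    (22 + (-17)*yZ^2 + 3*yZ^4) * w1 + ((-9) + 5*yZ^2 + -yZ^4) * w2 + (9 + (-5)*yZ^2 + yZ^4) * w3 +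
    ((-2) + -yZ^4) * w4,
    2 * w1 + ((-1) + -yZ^2) * w2 + (1 + yZ^2) * w3 + -yZ^4 * w4 + w5 + yZ^2 * w7,
    (-1) * w4 + (-1) * w7,
    ((-10) + 6*yZ^2 + -yZ^4) * w1 + (9 + (-5)*yZ^2 + yZ^4) * w2 + ((-9) + 5*yZ^2 + -yZ^4) * w3 +
    (1 + yZ^4) * w4 + w6 + (-1) * w7, ?_, ?_, ?_, ?_, ?_, ?_, ?_, ?_, ?_⟩
  · simp only [map_add, map_mul, map_pow, map_neg, map_ofNat, map_one, hY, hH, hr]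
    grind
  · simp only [H_apply, S_apply, T_apply, Pi.smul_apply, smul_eq_mul, Matrix.cons_val, tA, tB, tD, tE]
    push_cast [hf_coe, yZ_coe]
    try simp only [Za_num]
    linear_combination
      h0
  · simp only [H_apply, S_apply, T_apply, Pi.smul_apply, smul_eq_mul, Matrix.cons_val, tA, tB, tD, tE]
    push_cast [hf_coe, yZ_coe]
    try simp only [Za_num]
    linear_combination
      h3 +
      ((w4:ℝ)) * hyy
  · simp only [H_apply, S_apply, T_apply, Pi.smul_apply, smul_eq_mul, Matrix.cons_val, tA, tB, tD, tE]
    push_cast [hf_coe, yZ_coe]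
    try simp only [Za_num]
    linear_combination
      h1 +
      ((w4:ℝ)) * hyy
  · simp only [H_apply, S_apply, T_apply, Pi.smul_apply, smul_eq_mul, Matrix.cons_val, tA, tB, tD, tE]
    push_cast [hf_coe, yZ_coe]
    try simp only [Za_num]
    linear_combination
      h2 +
      (yR^2 * (w1:ℝ) + -yR^2 * (w2:ℝ) + yR^2 * (w3:ℝ) + (1 + -yR^2) * (w4:ℝ)) * hyy
  · simp only [H_apply, S_apply, T_apply, Pi.smul_apply, smul_eq_mul, Matrix.cons_val, tA, tB, tD, tE]
    push_cast [hf_coe, yZ_coe]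
    try simp only [Za_num]
    linear_combination
      h4
  · simp only [H_apply, S_apply, T_apply, Pi.smul_apply, smul_eq_mul, Matrix.cons_val, tA, tB, tD, tE]
    push_cast [hf_coe, yZ_coe]
    try simp only [Za_num]
    linear_combination
      h7 +
      ((w4:ℝ)) * hyy
  · simp only [H_apply, S_apply, T_apply, Pi.smul_apply, smul_eq_mul, Matrix.cons_val, tA, tB, tD, tE]
    push_cast [hf_coe, yZ_coe]
    try simp only [Za_num]
    linear_combination
      h5 +
      ((w4:ℝ)) * hyy
  · simp only [H_apply, S_apply, T_apply, Pi.smul_apply, smul_eq_mul, Matrix.cons_val, tA, tB, tD, tE]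
    push_cast [hf_coe, yZ_coe]
    try simp only [Za_num]
    linear_combination
      h6 +
      ((-yR^2 + (-3)*yR^4) * (w1:ℝ) + yR^4 * (w2:ℝ) + -yR^4 * (w3:ℝ) + (1 + yR^4) * (w4:ℝ)) * hyy

/-- The lattice is stable under `y² T H`. -/
lemma inv_TH (ρ : Zα →+* ZMod 3) (hρ : ρ (⟨αR, alpha_mem_Zα⟩ : Zα) = 0)
    (r : ZMod 3) (v : Fin 8 → ℝ) (h : InvV ρ r v) :
    InvV ρ r (yR ^ 2 • (That *ᵥ (Hhat *ᵥ v))) := by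
  obtain ⟨w0, w1, w2, w3, w4, w5, w6, w7, hr, h0, h1, h2, h3, h4, h5, h6, h7⟩ := h
  have hY := rho_y ρ hρ
  have hH := rho_hf ρ
  have hyy := hy
  refine ⟨w2 + yZ^2 * w5,
    w2,
    (3*hf + (-4)*yZ^2 + 2*yZ^4) * w0 + ((-3)*hf + 9*hf*yZ^2 + (-2)*yZ^4) * w1 + (4 + (-23)*hf*yZ^2 +
    5*yZ^4) * w2 + ((-9) + 24*yZ^2 + (-10)*yZ^4) * w3 + (15 + (-81)*hf*yZ^2 + 18*yZ^4) * w4 +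
    ((-3) + 7*yZ^2 + (-2)*yZ^4) * w5 + ((-3) + 15*hf*yZ^2 + (-5)*hf*yZ^4) * w6 + ((-3) +
    15*hf*yZ^2 + (-5)*hf*yZ^4) * w7,
    ((-3)*hf + 2*yZ^2 + (-1)*hf*yZ^4) * w0 + ((-3)*hf + 2*yZ^2 + (-1)*hf*yZ^4) * w1 + (1*hf +
    (-2)*yZ^2 + 1*hf*yZ^4) * w2 + ((-3)*hf*yZ^2 + 1*hf*yZ^4) * w3 + (3*hf + (-2)*yZ^2 +
    1*hf*yZ^4) * w5 + (3*hf + (-3)*yZ^2 + yZ^4) * w6,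
    ((-3) + 7*hf*yZ^2 + -yZ^4) * w0 + ((-9)*hf + 2*yZ^2) * w1 + (41*hf + (-31)*hf*yZ^2 +
    2*yZ^4) * w2 + (1 + (-9)*yZ^2 + 7*hf*yZ^4) * w3 + ((-9)*hf + 13*yZ^2 + (-11)*hf*yZ^4) * w4 +
    (9 + (-23)*hf*yZ^2 + 5*hf*yZ^4) * w5 + (9*hf + (-15)*hf*yZ^2 + 2*yZ^4) * w6 + (3 + (-6)*yZ^2 +
    3*hf*yZ^4) * w7,
    ((-3)*hf + 3*yZ^2 + -yZ^4) * w0 + ((-3)*hf + 3*hf*yZ^2) * w1 + (3*hf*yZ^2 + -yZ^4) * w2 + (1 +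
    (-4)*yZ^2 + 2*yZ^4) * w3 + ((-3) + 17*hf*yZ^2 + (-4)*yZ^4) * w4 + (3 + (-7)*yZ^2 +
    2*yZ^4) * w5 + (3 + (-15)*hf*yZ^2 + 5*hf*yZ^4) * w6 + (3 + (-15)*hf*yZ^2 + 5*hf*yZ^4) * w7,
    ((-3)*hf + 1*hf*yZ^2) * w0 + ((-3)*hf + 1*hf*yZ^2) * w1 + (13*hf + (-11)*hf*yZ^2 + yZ^4) * w2 +
    (1 + (-7)*hf*yZ^2 + yZ^4) * w3 + (3*hf + (-1)*hf*yZ^2) * w5 + (3*hf*yZ^2 + (-1)*hf*yZ^4) * w6,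
    (3 + (-7)*hf*yZ^2 + yZ^4) * w0 + (9 + (-9)*yZ^2 + 3*hf*yZ^4) * w1 + ((-3)*hf + yZ^2 +
    1*hf*yZ^4) * w2 + (7*hf + 1*hf*yZ^2 + (-3)*hf*yZ^4) * w3 + (3 + (-9)*yZ^2 + 9*hf*yZ^4) * w4 +
    ((-9)*hf + 8*yZ^2 + (-2)*yZ^4) * w5 + ((-9)*hf + 9*yZ^2 + (-5)*hf*yZ^4) * w6 + ((-3)*hf +
    9*hf*yZ^2 + (-3)*hf*yZ^4) * w7, ?_, ?_, ?_, ?_, ?_, ?_, ?_, ?_, ?_⟩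
  · simp only [map_add, map_mul, map_pow, map_neg, map_ofNat, map_one, hY, hH, hr]
    grind
  · simp only [H_apply, S_apply, T_apply, Pi.smul_apply, smul_eq_mul, Matrix.cons_val, tA, tB, tD, tE]
    push_cast [hf_coe, yZ_coe]
    try simp only [Za_num]
    linear_combination
      yR^2 * h1
  · simp only [H_apply, S_apply, T_apply, Pi.smul_apply, smul_eq_mul, Matrix.cons_val, tA, tB, tD, tE]
    push_cast [hf_coe, yZ_coe]
    try simp only [Za_num]
    linear_combination
      (-yR^2 + (3/2)*yR^4 + (-1/3)*yR^6) * h0 + ((-1/2)*yR^4 + (1/6)*yR^6) * h2 + ((1/2)*yR^2 +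
      (-9/4)*yR^4 + (23/12)*yR^6 + (-2/3)*yR^8 + (1/12)*yR^10) * h3 + (yR^2 + (-5/6)*yR^4 +
      (1/6)*yR^6) * h4 + ((-3/2)*yR^2 + (5/3)*yR^4 + (-1/3)*yR^6) * h6 + (2*yR^2 + (-19/6)*yR^4 +
      (4/3)*yR^6 + (-1/6)*yR^8) * h7 +
      (((1/2) + (-1/3)*yR^2) * (w0:ℝ) + ((-1/2) + (-1/2)*yR^2 + (1/12)*yR^6) * (w1:ℝ) + ((4/3) +
      (-1/6)*yR^2 + (7/12)*yR^4 + (-1/4)*yR^6) * (w2:ℝ) + ((-3) + (-2/3)*yR^2 + (-5/6)*yR^4 +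
      (1/4)*yR^6) * (w3:ℝ) + (5 + (1/2)*yR^2 + (1/3)*yR^4 + (1/3)*yR^6 + (-1/6)*yR^8) * (w4:ℝ) +
      ((-1) + (1/3)*yR^2 + (-1/6)*yR^4 + (1/12)*yR^6) * (w5:ℝ) + ((-1) + (1/2)*yR^2 +
      (1/6)*yR^4) * (w6:ℝ) + ((-1) + (1/2)*yR^2 + (1/6)*yR^4 + (-1/6)*yR^6 + (1/12)*yR^8) * (w7:ℝ)) * hyy
  · simp only [H_apply, S_apply, T_apply, Pi.smul_apply, smul_eq_mul, Matrix.cons_val, tA, tB, tD, tE]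
    push_cast [hf_coe, yZ_coe]
    try simp only [Za_num]
    linear_combination
      ((-1/2)*yR^4 + (1/6)*yR^6) * h0 + (-yR^2 + (3/2)*yR^4 + (-1/3)*yR^6) * h2 + ((1/2)*yR^2 +
      (-9/4)*yR^4 + (23/12)*yR^6 + (-2/3)*yR^8 + (1/12)*yR^10) * h3 + ((-3/2)*yR^2 + (5/3)*yR^4 +
      (-1/3)*yR^6) * h4 + (yR^2 + (-5/6)*yR^4 + (1/6)*yR^6) * h6 + (2*yR^2 + (-19/6)*yR^4 +
      (4/3)*yR^6 + (-1/6)*yR^8) * h7 +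
      (((1/2) + (1/6)*yR^2) * (w0:ℝ) + ((-1/2) + (1/12)*yR^6) * (w1:ℝ) + ((4/3) + (-7/6)*yR^2 +
      (7/12)*yR^4 + (-1/4)*yR^6) * (w2:ℝ) + ((-3) + (-2/3)*yR^2 + (-1/3)*yR^4 +
      (1/4)*yR^6) * (w3:ℝ) + (5 + (1/2)*yR^2 + (1/3)*yR^4 + (1/3)*yR^6 + (-1/6)*yR^8) * (w4:ℝ) +
      ((-1) + (-1/6)*yR^2 + (-1/6)*yR^4 + (1/12)*yR^6) * (w5:ℝ) + ((-1) + (-1/3)*yR^4) * (w6:ℝ) +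
      ((-1) + (1/2)*yR^2 + (1/6)*yR^4 + (-1/6)*yR^6 + (1/12)*yR^8) * (w7:ℝ)) * hyy
  · simp only [H_apply, S_apply, T_apply, Pi.smul_apply, smul_eq_mul, Matrix.cons_val, tA, tB, tD, tE]
    push_cast [hf_coe, yZ_coe]
    try simp only [Za_num]
    linear_combination
      (-yR^2 + (3/2)*yR^4 + (-1/3)*yR^6) * h0 + (-yR^2 + (3/2)*yR^4 + (-1/3)*yR^6) * h2 +
      ((5/2)*yR^4 + (-10/3)*yR^6 + (4/3)*yR^8 + (-1/6)*yR^10) * h3 + (yR^2 + (-5/6)*yR^4 +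
      (1/6)*yR^6) * h4 + (yR^2 + (-5/6)*yR^4 + (1/6)*yR^6) * h6 + ((-3/4)*yR^2 + (19/12)*yR^4 +
      (-2/3)*yR^6 + (1/12)*yR^8) * h7 +
      (((1/2) + (-4/3)*yR^2) * (w0:ℝ) + ((-1/2) + (-1/2)*yR^2 + (1/4)*yR^4 + (-1/6)*yR^6) * (w1:ℝ) +
      ((4/3) + (-5/12)*yR^2 + (-2/3)*yR^4 + (1/4)*yR^6) * (w2:ℝ) + ((-3) + (7/3)*yR^2 + (2/3)*yR^4 +
      (-1/4)*yR^6) * (w3:ℝ) + (5 + (-9/2)*yR^2 + (-1/6)*yR^4 + (-1/6)*yR^6 + (1/12)*yR^8) * (w4:ℝ) +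
      ((-1) + (11/6)*yR^2 + (1/3)*yR^4 + (-1/6)*yR^6) * (w5:ℝ) + ((-1) + 2*yR^2 +
      (-1/3)*yR^4) * (w6:ℝ) + ((-1) + (3/2)*yR^2 + (1/6)*yR^4 + (1/3)*yR^6 + (-1/6)*yR^8) * (w7:ℝ)) * hyy
  · simp only [H_apply, S_apply, T_apply, Pi.smul_apply, smul_eq_mul, Matrix.cons_val, tA, tB, tD, tE]
    push_cast [hf_coe, yZ_coe]
    try simp only [Za_num]
    linear_combination
      yR^2 * h5
  · simp only [H_apply, S_apply, T_apply, Pi.smul_apply, smul_eq_mul, Matrix.cons_val, tA, tB, tD, tE]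
    push_cast [hf_coe, yZ_coe]
    try simp only [Za_num]
    linear_combination
      (yR^4 + (-5/6)*yR^6 + (1/6)*yR^8) * h0 + ((-3/2)*yR^4 + (5/3)*yR^6 + (-1/3)*yR^8) * h2 +
      ((-2)*yR^4 + (19/6)*yR^6 + (-4/3)*yR^8 + (1/6)*yR^10) * h3 + (yR^2 + (-3/2)*yR^4 +
      (1/3)*yR^6) * h4 + ((1/2)*yR^4 + (-1/6)*yR^6) * h6 + ((1/2)*yR^2 + (-9/4)*yR^4 +
      (23/12)*yR^6 + (-2/3)*yR^8 + (1/12)*yR^10) * h7 +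
      (((1/2) + (1/6)*yR^2 + (1/6)*yR^4) * (w0:ℝ) + ((-1/2) + (1/6)*yR^4 + (1/12)*yR^6) * (w1:ℝ) +
      ((4/3) + (3/4)*yR^4 + (-1/3)*yR^6 + (1/12)*yR^8) * (w2:ℝ) + ((-3) + -yR^2 + (-1/3)*yR^4 +
      (1/3)*yR^6 + (-1/12)*yR^8) * (w3:ℝ) + (5 + (3/2)*yR^2 + (1/2)*yR^4 + (1/6)*yR^6 +
      (-1/6)*yR^8 + (1/12)*yR^10) * (w4:ℝ) + ((-1) + (-2/3)*yR^2 + (-2/3)*yR^4 +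
      (1/6)*yR^6) * (w5:ℝ) + ((-1) + (-1/2)*yR^2 + (-1/3)*yR^4 + (-1/3)*yR^6) * (w6:ℝ) + ((-1) +
      (-1/2)*yR^2 + (-1/3)*yR^4 + (-1/3)*yR^6 + (1/6)*yR^8) * (w7:ℝ)) * hyy
  · simp only [H_apply, S_apply, T_apply, Pi.smul_apply, smul_eq_mul, Matrix.cons_val, tA, tB, tD, tE]
    push_cast [hf_coe, yZ_coe]
    try simp only [Za_num]
    linear_combination
      ((-3/2)*yR^4 + (5/3)*yR^6 + (-1/3)*yR^8) * h0 + (yR^4 + (-5/6)*yR^6 + (1/6)*yR^8) * h2 +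
      ((-2)*yR^4 + (19/6)*yR^6 + (-4/3)*yR^8 + (1/6)*yR^10) * h3 + ((1/2)*yR^4 + (-1/6)*yR^6) * h4 +
      (yR^2 + (-3/2)*yR^4 + (1/3)*yR^6) * h6 + ((1/2)*yR^2 + (-9/4)*yR^4 + (23/12)*yR^6 +
      (-2/3)*yR^8 + (1/12)*yR^10) * h7 +
      (((1/2) + (1/6)*yR^2 + (-1/3)*yR^4) * (w0:ℝ) + ((-1/2) + (-1/3)*yR^4 + (1/12)*yR^6) * (w1:ℝ) +
      ((4/3) + (3/4)*yR^4 + (-1/3)*yR^6 + (1/12)*yR^8) * (w2:ℝ) + ((-3) + -yR^2 + (-1/3)*yR^4 +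
      (1/3)*yR^6 + (-1/12)*yR^8) * (w3:ℝ) + (5 + (3/2)*yR^2 + (1/2)*yR^4 + (1/6)*yR^6 +
      (-1/6)*yR^8 + (1/12)*yR^10) * (w4:ℝ) + ((-1) + (-2/3)*yR^2 + (-1/6)*yR^4 +
      (1/6)*yR^6) * (w5:ℝ) + ((-1) + (-1/2)*yR^2 + (1/6)*yR^4 + (1/6)*yR^6) * (w6:ℝ) + ((-1) +
      (-1/2)*yR^2 + (-1/3)*yR^4 + (-1/3)*yR^6 + (1/6)*yR^8) * (w7:ℝ)) * hyy
  · simp only [H_apply, S_apply, T_apply, Pi.smul_apply, smul_eq_mul, Matrix.cons_val, tA, tB, tD, tE]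
    push_cast [hf_coe, yZ_coe]
    try simp only [Za_num]
    linear_combination
      (yR^4 + (-5/6)*yR^6 + (1/6)*yR^8) * h0 + (yR^4 + (-5/6)*yR^6 + (1/6)*yR^8) * h2 +
      ((3/4)*yR^4 + (-19/12)*yR^6 + (2/3)*yR^8 + (-1/12)*yR^10) * h3 + (yR^2 + (-3/2)*yR^4 +
      (1/3)*yR^6) * h4 + (yR^2 + (-3/2)*yR^4 + (1/3)*yR^6) * h6 + ((5/2)*yR^4 + (-10/3)*yR^6 +
      (4/3)*yR^8 + (-1/6)*yR^10) * h7 +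
      (((1/2) + (1/6)*yR^2 + (7/6)*yR^4) * (w0:ℝ) + ((-1/2) + (-1/3)*yR^4 + (1/12)*yR^6) * (w1:ℝ) +
      ((4/3) + (-1/2)*yR^2 + (-9/4)*yR^4 + (5/12)*yR^6 + (-1/6)*yR^8) * (w2:ℝ) + ((-3) + -yR^2 +
      (-10/3)*yR^4 + (-5/12)*yR^6 + (1/6)*yR^8) * (w3:ℝ) + (5 + (3/2)*yR^2 + (11/2)*yR^4 +
      (1/6)*yR^6 + (1/3)*yR^8 + (-1/6)*yR^10) * (w4:ℝ) + ((-1) + (-2/3)*yR^2 + (-13/6)*yR^4 +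
      (-1/12)*yR^6) * (w5:ℝ) + ((-1) + (-1/2)*yR^2 + (-11/6)*yR^4 + (1/6)*yR^6) * (w6:ℝ) + ((-1) +
      (-1/2)*yR^2 + (-4/3)*yR^4 + (1/6)*yR^6 + (-1/12)*yR^8) * (w7:ℝ)) * hyy

/-- The lattice is stable under `y² T H³`. -/
lemma inv_THHH (ρ : Zα →+* ZMod 3) (hρ : ρ (⟨αR, alpha_mem_Zα⟩ : Zα) = 0)
    (r : ZMod 3) (v : Fin 8 → ℝ) (h : InvV ρ r v) :
    InvV ρ r (yR ^ 2 • (That *ᵥ (Hhat *ᵥ (Hhat *ᵥ (Hhat *ᵥ v))))) := by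
  obtain ⟨w0, w1, w2, w3, w4, w5, w6, w7, hr, h0, h1, h2, h3, h4, h5, h6, h7⟩ := h
  have hY := rho_y ρ hρ
  have hH := rho_hf ρ
  have hyy := hy
  refine ⟨w2 + yZ^2 * w5,
    (-1) * w2,
    (3*hf + (-4)*yZ^2 + 2*yZ^4) * w0 + ((-9)*hf + 21*hf*yZ^2 + (-3)*yZ^4) * w1 + (5*hf +
    (-11)*hf*yZ^2 + 3*hf*yZ^4) * w2 + ((-6) + 15*yZ^2 + (-5)*yZ^4) * w3 + (15*hf + (-39)*hf*yZ^2 +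
    15*hf*yZ^4) * w4 + (3 + (-8)*yZ^2 + 4*yZ^4) * w5 + (6 + (-33)*hf*yZ^2 + 8*yZ^4) * w6 + (6 +
    (-33)*hf*yZ^2 + 8*yZ^4) * w7,
    ((-3)*hf + 2*yZ^2 + (-1)*hf*yZ^4) * w0 + (3 + (-4)*yZ^2 + yZ^4) * w1 + (6 + (-11)*hf*yZ^2 +
    yZ^4) * w2 + (3*hf + (-2)*yZ^2 + 1*hf*yZ^4) * w3 + (-1)*hf*yZ^2 * w5 + (-1)*hf*yZ^4 * w6,
    ((-3) + 7*hf*yZ^2 + -yZ^4) * w0 + (21*hf + (-27)*hf*yZ^2 + 3*yZ^4) * w1 + (4 +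
    (-3)*hf*yZ^2) * w2 + (13*hf + (-23)*hf*yZ^2 + 3*yZ^4) * w3 + ((-9)*hf + 11*yZ^2 +
    (-7)*hf*yZ^4) * w4 + ((-9)*hf + 9*hf*yZ^2 + (-3)*hf*yZ^4) * w5 + ((-3)*hf + 3*yZ^2 +
    (-2)*yZ^4) * w6 + ((-3) + 6*yZ^2 + (-5)*hf*yZ^4) * w7,
    ((-3)*hf + 3*yZ^2 + -yZ^4) * w0 + (3*hf + (-9)*hf*yZ^2 + yZ^4) * w1 + ((-5)*hf + 7*hf*yZ^2 +
    (-1)*hf*yZ^4) * w2 + (2 + (-5)*yZ^2 + yZ^4) * w3 + ((-3)*hf + 7*hf*yZ^2 + (-1)*hf*yZ^4) * w4 +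
    ((-3) + 6*yZ^2 + (-2)*yZ^4) * w5 + ((-3) + 15*hf*yZ^2 + (-3)*yZ^4) * w6 + ((-3) + 15*hf*yZ^2 +
    (-3)*yZ^4) * w7,
    ((-3)*hf + 1*hf*yZ^2) * w0 + (6 + (-5)*yZ^2 + yZ^4) * w1 + (29*hf + (-27)*hf*yZ^2 +
    5*hf*yZ^4) * w2 + (1*hf + 1*hf*yZ^2) * w3 + (3*hf + (-5)*hf*yZ^2 + 1*hf*yZ^4) * w5 + (3*hf +
    (-3)*yZ^2 + 1*hf*yZ^4) * w6,
    (3 + (-7)*hf*yZ^2 + yZ^4) * w0 + ((-6) + 9*yZ^2 + (-2)*yZ^4) * w1 + ((-9) + 8*yZ^2 +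
    (-3)*hf*yZ^4) * w2 + ((-5) + 17*hf*yZ^2 + (-2)*yZ^4) * w3 + (3*hf + (-9)*hf*yZ^2 +
    3*hf*yZ^4) * w4 + (9*hf + (-13)*hf*yZ^2 + 2*yZ^4) * w5 + (3 + (-6)*yZ^2 + 5*hf*yZ^4) * w6 + (3 +
    (-15)*hf*yZ^2 + 3*yZ^4) * w7, ?_, ?_, ?_, ?_, ?_, ?_, ?_, ?_, ?_⟩
  · simp only [map_add, map_mul, map_pow, map_neg, map_ofNat, map_one, hY, hH, hr]
    grind
  · simp only [H_apply, S_apply, T_apply, Pi.smul_apply, smul_eq_mul, Matrix.cons_val, tA, tB, tD, tE]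
    push_cast [hf_coe, yZ_coe]
    try simp only [Za_num]
    linear_combination
      yR^2 * h1
  · simp only [H_apply, S_apply, T_apply, Pi.smul_apply, smul_eq_mul, Matrix.cons_val, tA, tB, tD, tE]
    push_cast [hf_coe, yZ_coe]
    try simp only [Za_num]
    linear_combination
      (-yR^2 + (3/2)*yR^4 + (-1/3)*yR^6) * h0 + ((-2)*yR^4 + (19/6)*yR^6 + (-4/3)*yR^8 +
      (1/6)*yR^10) * h2 + ((-1/4)*yR^2 + (-15/8)*yR^4 + (115/24)*yR^6 + (-13/4)*yR^8 + (7/8)*yR^10 +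
      (-1/12)*yR^12) * h3 + (-yR^2 + (5/6)*yR^4 + (-1/6)*yR^6) * h4 + ((-3/4)*yR^2 + (1/12)*yR^4 +
      (1/3)*yR^6 + (-1/12)*yR^8) * h6 + ((1/4)*yR^2 + (49/24)*yR^4 + (-10/3)*yR^6 + (15/8)*yR^8 +
      (-11/24)*yR^10 + (1/24)*yR^12) * h7 +
      (((1/2) + (-1/3)*yR^2) * (w0:ℝ) + ((-3/2) + (-1/2)*yR^2 + (-1/4)*yR^4 + (5/12)*yR^6 +
      (-1/8)*yR^8) * (w1:ℝ) + ((5/6) + (1/12)*yR^2 + (3/4)*yR^4 + (-1/6)*yR^6 + (-1/8)*yR^8 +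
      (1/24)*yR^10) * (w2:ℝ) + ((-2) + (-1/3)*yR^2 + (-1/4)*yR^4 + (-1/8)*yR^6 + (1/8)*yR^8 +
      (-1/24)*yR^10) * (w3:ℝ) + ((5/2) + (1/2)*yR^2 + (1/6)*yR^4 + (1/6)*yR^6 + (1/4)*yR^8 +
      (-5/24)*yR^10 + (1/24)*yR^12) * (w4:ℝ) + (1 + (-2/3)*yR^2 + (-7/12)*yR^4 + (13/24)*yR^6 +
      (-1/12)*yR^8) * (w5:ℝ) + (2 + (-1/2)*yR^2 + (-1/3)*yR^4 + (-1/3)*yR^6 + (1/6)*yR^8) * (w6:ℝ) +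
      (2 + (-1/2)*yR^2 + (-1/3)*yR^4 + (-1/4)*yR^6 + (3/8)*yR^8 + (-1/12)*yR^10) * (w7:ℝ)) * hyy
  · simp only [H_apply, S_apply, T_apply, Pi.smul_apply, smul_eq_mul, Matrix.cons_val, tA, tB, tD, tE]
    push_cast [hf_coe, yZ_coe]
    try simp only [Za_num]
    linear_combination
      ((-1/2)*yR^4 + (1/6)*yR^6) * h0 + ((1/2)*yR^2 + (3/4)*yR^4 + (-19/12)*yR^6 + (2/3)*yR^8 +
      (-1/12)*yR^10) * h2 + ((-1/4)*yR^2 + (-15/8)*yR^4 + (115/24)*yR^6 + (-13/4)*yR^8 +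
      (7/8)*yR^10 + (-1/12)*yR^12) * h3 + ((3/2)*yR^2 + (-5/3)*yR^4 + (1/3)*yR^6) * h4 + (-yR^2 +
      (7/3)*yR^4 + (-7/6)*yR^6 + (1/6)*yR^8) * h6 + ((1/4)*yR^2 + (49/24)*yR^4 + (-10/3)*yR^6 +
      (15/8)*yR^8 + (-11/24)*yR^10 + (1/24)*yR^12) * h7 +
      (((1/2) + (1/6)*yR^2) * (w0:ℝ) + ((-3/2) + (-3/2)*yR^2 + (-1/2)*yR^4 + (2/3)*yR^6 +
      (-1/8)*yR^8) * (w1:ℝ) + ((5/6) + (-5/3)*yR^2 + (1/2)*yR^4 + (-1/6)*yR^6 + (-1/8)*yR^8 +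
      (1/24)*yR^10) * (w2:ℝ) + ((-2) + (-5/6)*yR^2 + (-3/4)*yR^4 + (3/8)*yR^6 + (1/8)*yR^8 +
      (-1/24)*yR^10) * (w3:ℝ) + ((5/2) + (1/2)*yR^2 + (1/6)*yR^4 + (1/6)*yR^6 + (1/4)*yR^8 +
      (-5/24)*yR^10 + (1/24)*yR^12) * (w4:ℝ) + (1 + (-2/3)*yR^2 + (-1/12)*yR^4 + (7/24)*yR^6 +
      (-1/12)*yR^8) * (w5:ℝ) + (2 + (-1/2)*yR^2 + (1/6)*yR^4 + (1/6)*yR^6 + (-1/12)*yR^8) * (w6:ℝ) +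
      (2 + (-1/2)*yR^2 + (-1/3)*yR^4 + (-1/4)*yR^6 + (3/8)*yR^8 + (-1/12)*yR^10) * (w7:ℝ)) * hyy
  · simp only [H_apply, S_apply, T_apply, Pi.smul_apply, smul_eq_mul, Matrix.cons_val, tA, tB, tD, tE]
    push_cast [hf_coe, yZ_coe]
    try simp only [Za_num]
    linear_combination
      (-yR^2 + (3/2)*yR^4 + (-1/3)*yR^6) * h0 + ((1/2)*yR^2 + (3/4)*yR^4 + (-19/12)*yR^6 +
      (2/3)*yR^8 + (-1/12)*yR^10) * h2 + ((-1/8)*yR^4 + (-13/12)*yR^6 + (9/8)*yR^8 + (-3/8)*yR^10 +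
      (1/24)*yR^12) * h3 + (-yR^2 + (5/6)*yR^4 + (-1/6)*yR^6) * h4 + (-yR^2 + (7/3)*yR^4 +
      (-7/6)*yR^6 + (1/6)*yR^8) * h6 + ((-3/8)*yR^2 + (-71/24)*yR^4 + (71/12)*yR^6 + (-29/8)*yR^8 +
      (11/12)*yR^10 + (-1/12)*yR^12) * h7 +
      (((1/2) + (-4/3)*yR^2) * (w0:ℝ) + ((-3/2) + 2*yR^2 + (3/8)*yR^4 + (-11/24)*yR^6 +
      (1/8)*yR^8) * (w1:ℝ) + ((5/6) + (23/24)*yR^2 + (-1/8)*yR^4 + (-7/24)*yR^6 + (3/8)*yR^8 +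
      (-1/12)*yR^10) * (w2:ℝ) + ((-2) + (13/6)*yR^2 + (1/2)*yR^6 + (-3/8)*yR^8 +
      (1/12)*yR^10) * (w3:ℝ) + ((5/2) + (-2)*yR^2 + (-1/3)*yR^4 + (-1/3)*yR^6 + (-3/8)*yR^8 +
      (5/12)*yR^10 + (-1/12)*yR^12) * (w4:ℝ) + (1 + (-5/3)*yR^2 + (1/6)*yR^4 + (-5/24)*yR^6 +
      (1/24)*yR^8) * (w5:ℝ) + (2 + (-5/2)*yR^2 + (1/6)*yR^4 + (1/6)*yR^6 + (-1/12)*yR^8) * (w6:ℝ) +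
      (2 + (-5/2)*yR^2 + (1/6)*yR^4 + (-1/8)*yR^8 + (1/24)*yR^10) * (w7:ℝ)) * hyy
  · simp only [H_apply, S_apply, T_apply, Pi.smul_apply, smul_eq_mul, Matrix.cons_val, tA, tB, tD, tE]
    push_cast [hf_coe, yZ_coe]
    try simp only [Za_num]
    linear_combination
      -yR^2 * h5
  · simp only [H_apply, S_apply, T_apply, Pi.smul_apply, smul_eq_mul, Matrix.cons_val, tA, tB, tD, tE]
    push_cast [hf_coe, yZ_coe]
    try simp only [Za_num]
    linear_combination
      (yR^4 + (-5/6)*yR^6 + (1/6)*yR^8) * h0 + ((3/4)*yR^4 + (-1/12)*yR^6 + (-1/3)*yR^8 +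
      (1/12)*yR^10) * h2 + ((1/4)*yR^4 + (49/24)*yR^6 + (-10/3)*yR^8 + (15/8)*yR^10 +
      (-11/24)*yR^12 + (1/24)*yR^14) * h3 + (-yR^2 + (3/2)*yR^4 + (-1/3)*yR^6) * h4 + ((-2)*yR^4 +
      (19/6)*yR^6 + (-4/3)*yR^8 + (1/6)*yR^10) * h6 + ((1/4)*yR^2 + (15/8)*yR^4 + (-115/24)*yR^6 +
      (13/4)*yR^8 + (-7/8)*yR^10 + (1/12)*yR^12) * h7 +
      (((1/2) + (1/6)*yR^2 + (1/6)*yR^4) * (w0:ℝ) + ((-3/2) + -yR^2 + (-7/12)*yR^4 + (17/24)*yR^6 +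
      (-7/24)*yR^8 + (1/24)*yR^10) * (w1:ℝ) + ((5/6) + (7/12)*yR^2 + (7/24)*yR^4 + (-1/8)*yR^6 +
      (-1/8)*yR^8 + (1/24)*yR^10) * (w2:ℝ) + ((-2) + -yR^2 + (-2/3)*yR^4 + (-5/12)*yR^6 +
      (1/3)*yR^8 + (-1/24)*yR^10) * (w3:ℝ) + ((5/2) + yR^2 + (1/2)*yR^4 + (1/3)*yR^6 + (1/4)*yR^8 +
      (-3/8)*yR^10 + (1/12)*yR^12) * (w4:ℝ) + (1 + (1/3)*yR^2 + (1/3)*yR^4 + (1/3)*yR^6 +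
      (-5/24)*yR^8 + (1/24)*yR^10) * (w5:ℝ) + (2 + (1/2)*yR^2 + (1/6)*yR^4 + (1/6)*yR^6 +
      (1/12)*yR^8) * (w6:ℝ) + (2 + (1/2)*yR^2 + (1/6)*yR^4 + (1/6)*yR^6 + (1/4)*yR^8 +
      (-5/24)*yR^10 + (1/24)*yR^12) * (w7:ℝ)) * hyy
  · simp only [H_apply, S_apply, T_apply, Pi.smul_apply, smul_eq_mul, Matrix.cons_val, tA, tB, tD, tE]
    push_cast [hf_coe, yZ_coe]
    try simp only [Za_num]
    linear_combination
      ((-3/2)*yR^4 + (5/3)*yR^6 + (-1/3)*yR^8) * h0 + (yR^4 + (-7/3)*yR^6 + (7/6)*yR^8 +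
      (-1/6)*yR^10) * h2 + ((1/4)*yR^4 + (49/24)*yR^6 + (-10/3)*yR^8 + (15/8)*yR^10 +
      (-11/24)*yR^12 + (1/24)*yR^14) * h3 + ((-1/2)*yR^4 + (1/6)*yR^6) * h4 + ((1/2)*yR^2 +
      (3/4)*yR^4 + (-19/12)*yR^6 + (2/3)*yR^8 + (-1/12)*yR^10) * h6 + ((1/4)*yR^2 + (15/8)*yR^4 +
      (-115/24)*yR^6 + (13/4)*yR^8 + (-7/8)*yR^10 + (1/12)*yR^12) * h7 +
      (((1/2) + (1/6)*yR^2 + (-1/3)*yR^4) * (w0:ℝ) + ((-3/2) + -yR^2 + (-1/12)*yR^4 + (17/24)*yR^6 +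
      (-7/24)*yR^8 + (1/24)*yR^10) * (w1:ℝ) + ((5/6) + (1/12)*yR^2 + (-5/24)*yR^4 + (-1/8)*yR^6 +
      (-1/8)*yR^8 + (1/24)*yR^10) * (w2:ℝ) + ((-2) + -yR^2 + (-1/6)*yR^4 + (1/3)*yR^6 +
      (1/12)*yR^8 + (-1/24)*yR^10) * (w3:ℝ) + ((5/2) + yR^2 + (1/2)*yR^4 + (1/3)*yR^6 + (1/4)*yR^8 +
      (-3/8)*yR^10 + (1/12)*yR^12) * (w4:ℝ) + (1 + (1/3)*yR^2 + (1/3)*yR^4 + (1/12)*yR^6 +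
      (-5/24)*yR^8 + (1/24)*yR^10) * (w5:ℝ) + (2 + (1/2)*yR^2 + (1/6)*yR^4 + (1/6)*yR^6 +
      (-1/6)*yR^8) * (w6:ℝ) + (2 + (1/2)*yR^2 + (1/6)*yR^4 + (1/6)*yR^6 + (1/4)*yR^8 +
      (-5/24)*yR^10 + (1/24)*yR^12) * (w7:ℝ)) * hyy
  · simp only [H_apply, S_apply, T_apply, Pi.smul_apply, smul_eq_mul, Matrix.cons_val, tA, tB, tD, tE]
    push_cast [hf_coe, yZ_coe]
    try simp only [Za_num]
    linear_combination
      (yR^4 + (-5/6)*yR^6 + (1/6)*yR^8) * h0 + (yR^4 + (-7/3)*yR^6 + (7/6)*yR^8 +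
      (-1/6)*yR^10) * h2 + ((-3/8)*yR^4 + (-71/24)*yR^6 + (71/12)*yR^8 + (-29/8)*yR^10 +
      (11/12)*yR^12 + (-1/12)*yR^14) * h3 + (-yR^2 + (3/2)*yR^4 + (-1/3)*yR^6) * h4 + ((1/2)*yR^2 +
      (3/4)*yR^4 + (-19/12)*yR^6 + (2/3)*yR^8 + (-1/12)*yR^10) * h6 + ((1/8)*yR^4 + (13/12)*yR^6 +
      (-9/8)*yR^8 + (3/8)*yR^10 + (-1/24)*yR^12) * h7 +
      (((1/2) + (1/6)*yR^2 + (7/6)*yR^4) * (w0:ℝ) + ((-3/2) + -yR^2 + (-10/3)*yR^4 + (-5/12)*yR^6 +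
      (11/24)*yR^8 + (-1/12)*yR^10) * (w1:ℝ) + ((5/6) + (5/6)*yR^2 + (-1/3)*yR^4 + (3/4)*yR^6 +
      (-3/8)*yR^8 + (1/24)*yR^10) * (w2:ℝ) + ((-2) + -yR^2 + (-19/6)*yR^4 + (-1/24)*yR^6 +
      (5/24)*yR^8 + (-1/24)*yR^10) * (w3:ℝ) + ((5/2) + yR^2 + 3*yR^4 + (-1/6)*yR^6 + (1/8)*yR^10 +
      (-1/24)*yR^12) * (w4:ℝ) + (1 + (1/3)*yR^2 + (4/3)*yR^4 + (-13/24)*yR^6 + (5/12)*yR^8 +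
      (-1/12)*yR^10) * (w5:ℝ) + (2 + (1/2)*yR^2 + (13/6)*yR^4 + (1/6)*yR^6 + (-1/6)*yR^8) * (w6:ℝ) +
      (2 + (1/2)*yR^2 + (13/6)*yR^4 + (-1/3)*yR^6 + (-3/8)*yR^8 + (5/12)*yR^10 +
      (-1/12)*yR^12) * (w7:ℝ)) * hyy

/-- Applying `y² T` to a column of a Clifford operator yields a vector of the lattice. -/
lemma inv_base (ρ : Zα →+* ZMod 3) (hρ : ρ (⟨αR, alpha_mem_Zα⟩ : Zα) = 0)
    (v : Fin 8 → ℝ) (a0 a1 a2 a3 b0 b1 b2 b3 : Zα)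
    (h0 : v 0 = a0) (h1 : v 1 = a1) (h2 : v 2 = a2) (h3 : v 3 = a3)
    (h4 : v 4 = yR * (3 - yR ^ 2) * b0) (h5 : v 5 = yR * (3 - yR ^ 2) * b1)
    (h6 : v 6 = yR * (3 - yR ^ 2) * b2) (h7 : v 7 = yR * (3 - yR ^ 2) * b3) :
    InvV ρ (2 * (ρ a1 + ρ a2 + ρ a3)) (yR ^ 2 • (That *ᵥ v)) := by
  have hY := rho_y ρ hρ
  have hH := rho_hf ρ
  have hyy := hy
  refine ⟨a0,
    (3*yZ^2 + -yZ^4) * b0,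
    (1*hf + -yZ^2 + 1*hf*yZ^4) * a1 + (1*hf + -yZ^2 + 1*hf*yZ^4) * a2 + ((-1) + 2*yZ^2 +
    (-1)*hf*yZ^4) * a3 + ((-3)*hf + 3*yZ^2 + (-1)*hf*yZ^4) * b1 + ((-3)*hf + 3*yZ^2 +
    (-1)*hf*yZ^4) * b2 + (-1)*hf*yZ^4 * b3,
    ((-5)*hf + 5*hf*yZ^2 + (-1)*hf*yZ^4) * a1 + (5*hf + (-5)*hf*yZ^2 + 1*hf*yZ^4) * a3 + ((-3) +
    yZ^2) * b0 + (3*hf + (-5)*hf*yZ^2 + 1*hf*yZ^4) * b1 + ((-3)*hf + 5*hf*yZ^2 +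
    (-1)*hf*yZ^4) * b3,
    ((-11)*hf + 5*yZ^2 + -yZ^4) * a1 + ((-11)*hf + 5*yZ^2 + -yZ^4) * a2 + (11 + (-21)*hf*yZ^2 +
    2*yZ^4) * a3 + (7*hf + (-5)*yZ^2 + yZ^4) * b1 + (7*hf + (-5)*yZ^2 + yZ^4) * b2 + ((-4) +
    11*hf*yZ^2 + -yZ^4) * b3,
    ((-3)*hf + 2*yZ^2 + (-1)*hf*yZ^4) * a1 + ((-3)*hf + 2*yZ^2 + (-1)*hf*yZ^4) * a2 + (1 +
    (-2)*yZ^2 + 1*hf*yZ^4) * a3 + (1*hf + (-2)*yZ^2 + 1*hf*yZ^4) * b1 + (1*hf + (-2)*yZ^2 +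
    1*hf*yZ^4) * b2 + (2 + (-2)*yZ^2 + 1*hf*yZ^4) * b3,
    ((-4) + 3*yZ^2 + (-1)*hf*yZ^4) * a1 + (4 + (-3)*yZ^2 + 1*hf*yZ^4) * a3 + ((-5) + 5*yZ^2 +
    -yZ^4) * b0 + (8 + (-8)*yZ^2 + 3*hf*yZ^4) * b1 + ((-8) + 8*yZ^2 + (-3)*hf*yZ^4) * b3,
    (11*hf + (-5)*yZ^2 + yZ^4) * a1 + (3*hf + (-2)*yZ^2 + 1*hf*yZ^4) * a2 + ((-7) + 15*hf*yZ^2 +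
    (-3)*hf*yZ^4) * a3 + (5 + (-5)*yZ^2 + yZ^4) * b0 + ((-7)*hf + 5*yZ^2 + -yZ^4) * b1 + (9*hf +
    (-3)*yZ^2 + 1*hf*yZ^4) * b2 + ((-4) + 5*hf*yZ^2 + (-1)*hf*yZ^4) * b3, ?_, ?_, ?_, ?_, ?_, ?_, ?_, ?_, ?_⟩
  · simp only [map_add, map_mul, map_pow, map_neg, map_ofNat, map_one, hY, hH]
    grind
  · simp only [H_apply, S_apply, T_apply, Pi.smul_apply, smul_eq_mul, Matrix.cons_val, tA, tB, tD, tE]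
    push_cast [hf_coe, yZ_coe]
    try simp only [Za_num]
    linear_combination
      yR^2 * h0
  · simp only [H_apply, S_apply, T_apply, Pi.smul_apply, smul_eq_mul, Matrix.cons_val, tA, tB, tD, tE]
    push_cast [hf_coe, yZ_coe]
    try simp only [Za_num]
    linear_combination
      (-yR^2 + (3/2)*yR^4 + (-1/3)*yR^6) * h1 + (-yR^2 + (3/2)*yR^4 + (-1/3)*yR^6) * h2 +
      ((-1/2)*yR^4 + (1/6)*yR^6) * h3 + (-yR^3 + (5/6)*yR^5 + (-1/6)*yR^7) * h5 + (-yR^3 +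
      (5/6)*yR^5 + (-1/6)*yR^7) * h6 + ((3/2)*yR^3 + (-5/3)*yR^5 + (1/3)*yR^7) * h7 +
      ((1/6) * (a1:ℝ) + (1/6) * (a2:ℝ) + (-1/3) * (a3:ℝ) + ((-1/2) + (-1/3)*yR^2 +
      (1/6)*yR^4) * (b1:ℝ) + ((-1/2) + (-1/3)*yR^2 + (1/6)*yR^4) * (b2:ℝ) + ((2/3)*yR^2 +
      (-1/3)*yR^4) * (b3:ℝ)) * hyy
  · simp only [H_apply, S_apply, T_apply, Pi.smul_apply, smul_eq_mul, Matrix.cons_val, tA, tB, tD, tE]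
    push_cast [hf_coe, yZ_coe]
    try simp only [Za_num]
    linear_combination
      ((-1/2)*yR^4 + (1/6)*yR^6) * h1 + (-yR^2 + (3/2)*yR^4 + (-1/3)*yR^6) * h2 + (-yR^2 +
      (3/2)*yR^4 + (-1/3)*yR^6) * h3 + ((3/2)*yR^3 + (-5/3)*yR^5 + (1/3)*yR^7) * h5 + (-yR^3 +
      (5/6)*yR^5 + (-1/6)*yR^7) * h6 + (-yR^3 + (5/6)*yR^5 + (-1/6)*yR^7) * h7 +
      (((1/6) + (1/2)*yR^2) * (a1:ℝ) + (1/6) * (a2:ℝ) + ((-1/3) + (-1/2)*yR^2) * (a3:ℝ) +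
      yR^2 * (b0:ℝ) + ((-1/2) + (-5/6)*yR^2 + (-1/3)*yR^4) * (b1:ℝ) + ((-1/2) + (-1/3)*yR^2 +
      (1/6)*yR^4) * (b2:ℝ) + ((7/6)*yR^2 + (1/6)*yR^4) * (b3:ℝ)) * hyy
  · simp only [H_apply, S_apply, T_apply, Pi.smul_apply, smul_eq_mul, Matrix.cons_val, tA, tB, tD, tE]
    push_cast [hf_coe, yZ_coe]
    try simp only [Za_num]
    linear_combination
      (-yR^2 + (3/2)*yR^4 + (-1/3)*yR^6) * h1 + ((-1/2)*yR^4 + (1/6)*yR^6) * h2 + (-yR^2 +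
      (3/2)*yR^4 + (-1/3)*yR^6) * h3 + (-yR^3 + (5/6)*yR^5 + (-1/6)*yR^7) * h5 + ((3/2)*yR^3 +
      (-5/3)*yR^5 + (1/3)*yR^7) * h6 + (-yR^3 + (5/6)*yR^5 + (-1/6)*yR^7) * h7 +
      (((1/6) + -yR^2) * (a1:ℝ) + ((1/6) + (-1/2)*yR^2) * (a2:ℝ) + ((-1/3) + (3/2)*yR^2) * (a3:ℝ) +
      -yR^2 * (b0:ℝ) + ((-1/2) + (2/3)*yR^2 + (1/6)*yR^4) * (b1:ℝ) + ((-1/2) + (1/6)*yR^2 +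
      (-1/3)*yR^4) * (b2:ℝ) + ((1/6)*yR^2 + (1/6)*yR^4) * (b3:ℝ)) * hyy
  · simp only [H_apply, S_apply, T_apply, Pi.smul_apply, smul_eq_mul, Matrix.cons_val, tA, tB, tD, tE]
    push_cast [hf_coe, yZ_coe]
    try simp only [Za_num]
    linear_combination
      yR^3 * h4
  · simp only [H_apply, S_apply, T_apply, Pi.smul_apply, smul_eq_mul, Matrix.cons_val, tA, tB, tD, tE]
    push_cast [hf_coe, yZ_coe]
    try simp only [Za_num]
    linear_combination
      (yR^4 + (-5/6)*yR^6 + (1/6)*yR^8) * h1 + (yR^4 + (-5/6)*yR^6 + (1/6)*yR^8) * h2 +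
      ((-3/2)*yR^4 + (5/3)*yR^6 + (-1/3)*yR^8) * h3 + (-yR^3 + (3/2)*yR^5 + (-1/3)*yR^7) * h5 +
      (-yR^3 + (3/2)*yR^5 + (-1/3)*yR^7) * h6 + ((-1/2)*yR^5 + (1/6)*yR^7) * h7 +
      (((1/6) + (1/6)*yR^2) * (a1:ℝ) + ((1/6) + (1/6)*yR^2) * (a2:ℝ) + ((-1/3) +
      (-1/3)*yR^2) * (a3:ℝ) + ((-1/2) + (-1/2)*yR^2 + (1/3)*yR^4) * (b1:ℝ) + ((-1/2) + (-1/2)*yR^2 +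
      (1/3)*yR^4) * (b2:ℝ) + (-1/6)*yR^4 * (b3:ℝ)) * hyy
  · simp only [H_apply, S_apply, T_apply, Pi.smul_apply, smul_eq_mul, Matrix.cons_val, tA, tB, tD, tE]
    push_cast [hf_coe, yZ_coe]
    try simp only [Za_num]
    linear_combination
      ((-3/2)*yR^4 + (5/3)*yR^6 + (-1/3)*yR^8) * h1 + (yR^4 + (-5/6)*yR^6 + (1/6)*yR^8) * h2 +
      (yR^4 + (-5/6)*yR^6 + (1/6)*yR^8) * h3 + ((-1/2)*yR^5 + (1/6)*yR^7) * h5 + (-yR^3 +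
      (3/2)*yR^5 + (-1/3)*yR^7) * h6 + (-yR^3 + (3/2)*yR^5 + (-1/3)*yR^7) * h7 +
      (((1/6) + (1/6)*yR^2) * (a1:ℝ) + ((1/6) + (1/6)*yR^2) * (a2:ℝ) + ((-1/3) +
      (-1/3)*yR^2) * (a3:ℝ) + ((-1/2) + (-1/2)*yR^2 + (-1/6)*yR^4) * (b1:ℝ) + ((-1/2) +
      (-1/2)*yR^2 + (1/3)*yR^4) * (b2:ℝ) + (1/3)*yR^4 * (b3:ℝ)) * hyy
  · simp only [H_apply, S_apply, T_apply, Pi.smul_apply, smul_eq_mul, Matrix.cons_val, tA, tB, tD, tE]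
    push_cast [hf_coe, yZ_coe]
    try simp only [Za_num]
    linear_combination
      (yR^4 + (-5/6)*yR^6 + (1/6)*yR^8) * h1 + ((-3/2)*yR^4 + (5/3)*yR^6 + (-1/3)*yR^8) * h2 +
      (yR^4 + (-5/6)*yR^6 + (1/6)*yR^8) * h3 + (-yR^3 + (3/2)*yR^5 + (-1/3)*yR^7) * h5 +
      ((-1/2)*yR^5 + (1/6)*yR^7) * h6 + (-yR^3 + (3/2)*yR^5 + (-1/3)*yR^7) * h7 +
      (((1/6) + (1/6)*yR^2 + yR^4) * (a1:ℝ) + ((1/6) + (1/6)*yR^2 + yR^4) * (a2:ℝ) + ((-1/3) +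
      (-1/3)*yR^2 + (-2)*yR^4) * (a3:ℝ) + ((-1/2) + (-1/2)*yR^2 + (-2/3)*yR^4) * (b1:ℝ) + ((-1/2) +
      (-1/2)*yR^2 + (-7/6)*yR^4) * (b2:ℝ) + (4/3)*yR^4 * (b3:ℝ)) * hyy

/-! ### Clifford operators -/

/-- The weight of an entry of the adjoint representation of a Clifford operator: `1` in the
diagonal blocks, `√3` (written through `y`) in the off-diagonal ones. -/
def wt (i j : Fin 8) : ℝ := if (i.val < 4 ↔ j.val < 4) then 1 else yR * (3 - yR ^ 2)

/-- Shape of the adjoint representation of Clifford operators. -/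
def Cl (A : Matrix (Fin 8) (Fin 8) ℝ) : Prop := ∀ i j, ∃ b : Zα, A i j = wt i j * b

lemma Cl.mul {A B : Matrix (Fin 8) (Fin 8) ℝ} (hA : Cl A) (hB : Cl B) : Cl (A * B) := by
  intro i j
  choose a ha using fun k => hA i k
  choose b hb using fun k => hB k j
  have hw : ∀ k, ∃ c : Zα, A i k * B k j = wt i j * c := by
    intro k
    rw [ha, hb]
    by_cases h1 : i.val < 4 <;> by_cases h2 : k.val < 4 <;> by_cases h3 : j.val < 4
    all_goals first
      | (refine ⟨a k * b k, ?_⟩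
         push_cast
         simp [wt, h1, h2, h3]
         try ring
         done)
      | (refine ⟨3 * (a k * b k), ?_⟩
         push_cast
         simp only [wt, h1, h2, h3, Za_num]
         simp
         linear_combination ((a k : ℝ) * b k) * hy)
  choose c hc using hw
  refine ⟨∑ k, c k, ?_⟩
  rw [Matrix.mul_apply, Finset.sum_congr rfl (fun k _ => hc k), ← Finset.mul_sum]
  push_cast
  rfl

lemma Cl.one : Cl 1 := by
  intro i j
  by_cases h : i = j
  · subst h; exact ⟨1, by simp [wt]⟩
  · exact ⟨0, by simp [h]⟩

lemma Cl_S : Cl Shat := by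
  intro i j
  fin_cases i <;> fin_cases j <;>
    first
      | (refine ⟨0, ?_⟩; simp [Shat]; done)
      | (refine ⟨1, ?_⟩; simp [Shat, wt]; done)

set_option maxHeartbeats 1000000 in
lemma Cl_H : Cl Hhat := by
  intro i j
  fin_cases i <;> fin_cases j <;>
    first
      | (refine ⟨0, ?_⟩; simp [Hhat]; done)
      | (refine ⟨1, ?_⟩; simp [Hhat, wt]; done)
      | (refine ⟨-1, ?_⟩; simp [Hhat, wt]; done)
      | (refine ⟨hf, ?_⟩; simp [Hhat, wt, hf_coe]; ring1)
      | (refine ⟨-hf, ?_⟩; simp [Hhat, wt, hf_coe]; ring1)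

lemma CRep.pow {U : Matrix (Fin 3) (Fin 3) ℂ} {A : Matrix (Fin 8) (Fin 8) ℝ}
    (hU : CRep U A) (n : ℕ) : CRep (U ^ n) (A ^ n) := by
  induction n with
  | zero => simpa using CRep.one
  | succ n ih => rw [pow_succ, pow_succ]; exact ih.mul hU

lemma Cl.pow {A : Matrix (Fin 8) (Fin 8) ℝ} (hA : Cl A) (n : ℕ) : Cl (A ^ n) := by
  induction n with
  | zero => simpa using Cl.one
  | succ n ih => rw [pow_succ]; exact ih.mul hA

lemma Smat_pow : Smat ^ 9 = 1 := by
  have h9 : ζ ^ 9 = 1 := by linear_combination (ζ ^ 3 - 1) * zeta_six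
  have hS : Smat = Matrix.diagonal ![ζ^8, ζ^8, ζ^8 * ζ^3] := by
    rw [Smat, ← zeta_cube]; ext a b; fin_cases a <;> fin_cases b <;> simp
  rw [hS, Matrix.diagonal_pow, ← Matrix.diagonal_one]
  congr 1
  funext a
  fin_cases a <;> simp
  · rw [← pow_mul, mul_comm, pow_mul, h9, one_pow]
  · rw [← pow_mul, mul_comm, pow_mul, h9, one_pow]
  · rw [← pow_add, ← pow_mul, mul_comm, pow_mul, h9, one_pow]

lemma Hmat_pow : Hmat ^ 4 = 1 := by
  have h6 := zeta_six
  have hH : Hmat = (-(ζ ^ 3 - ζ ^ 6) / 3) • !![1,1,1; 1,ζ^3,ζ^6; 1,ζ^6,ζ^3] := by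
    rw [Hmat, Hscal, ← zeta_cube, ← pow_mul]
  have h2 : Hmat ^ 2 = !![-1,0,0; 0,0,-1; 0,-1,0] := by
    rw [hH, sq]
    ext a b; fin_cases a <;> fin_cases b <;> simp [Matrix.mul_apply, Fin.sum_univ_three] <;> grind
  rw [show 4 = 2 * 2 from rfl, pow_mul, h2, sq]
  ext a b; fin_cases a <;> fin_cases b <;> simp [Matrix.mul_apply, Fin.sum_univ_three]

lemma Cliff_rep (c : GL (Fin 3) ℂ) (hc : c ∈ Cliff) :
    ∃ A, CRep (c : Matrix (Fin 3) (Fin 3) ℂ) A ∧ Cl A := by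
  have key : (∃ A, CRep (c : Matrix (Fin 3) (Fin 3) ℂ) A ∧ Cl A) ∧
      (∃ A, CRep ((c⁻¹ : GL (Fin 3) ℂ) : Matrix (Fin 3) (Fin 3) ℂ) A ∧ Cl A) := by
    refine Subgroup.closure_induction (p := fun (c : GL (Fin 3) ℂ) _ =>
      (∃ A, CRep (c : Matrix (Fin 3) (Fin 3) ℂ) A ∧ Cl A) ∧
      (∃ A, CRep ((c⁻¹ : GL (Fin 3) ℂ) : Matrix (Fin 3) (Fin 3) ℂ) A ∧ Cl A)) ?_ ?_ ?_ ?_ hc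
    · intro x hx
      rcases hx with rfl | hx
      · refine ⟨⟨Hhat, CRep_H, Cl_H⟩, ⟨Hhat ^ 3, ?_, Cl_H.pow 3⟩⟩
        have h : Hg⁻¹ = Hg ^ 3 := by
          rw [inv_eq_iff_mul_eq_one, ← pow_succ']
          apply Units.ext
          exact Hmat_pow
        rw [h, Units.val_pow_eq_pow_val]
        exact CRep_H.pow 3
      · rw [Set.mem_singleton_iff] at hx
        subst hx
        refine ⟨⟨Shat, CRep_S, Cl_S⟩, ⟨Shat ^ 8, ?_, Cl_S.pow 8⟩⟩
        have h : Sg⁻¹ = Sg ^ 8 := by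
          rw [inv_eq_iff_mul_eq_one, ← pow_succ']
          apply Units.ext
          exact Smat_pow
        rw [h, Units.val_pow_eq_pow_val]
        exact CRep_S.pow 8
    · exact ⟨⟨1, CRep.one, Cl.one⟩, ⟨1, by rw [inv_one]; exact CRep.one, Cl.one⟩⟩
    · rintro x z _ _ ⟨⟨A, hA, hA'⟩, ⟨B, hB, hB'⟩⟩ ⟨⟨C, hC, hC'⟩, ⟨D, hD, hD'⟩⟩
      exact ⟨⟨A * C, hA.mul hC, hA'.mul hC'⟩,
        ⟨D * B, by rw [_root_.mul_inv_rev]; exact hD.mul hB, hD'.mul hB'⟩⟩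
    · rintro x _ ⟨h1, h2⟩
      exact ⟨h2, by rwa [inv_inv]⟩
  exact key.1

/-! ### Words -/

lemma T_comm_S : Tg * Sg = Sg * Tg := by
  apply Units.ext
  change Tmat * Smat = Smat * Tmat
  have hS : Smat = Matrix.diagonal ![ζ^8, ζ^8, ζ^8 * ω] := by
    rw [Smat]; ext a b; fin_cases a <;> fin_cases b <;> simp
  have hT : Tmat = Matrix.diagonal ![1, ζ, ζ^8] := by
    rw [Tmat]; ext a b; fin_cases a <;> fin_cases b <;> simp
  rw [hS, hT, Matrix.diagonal_mul_diagonal, Matrix.diagonal_mul_diagonal]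
  congr 1
  funext a
  exact mul_comm _ _

/-- One `T` followed by a syllable acts on the invariant lattice. -/
lemma syllable_step (ρ : Zα →+* ZMod 3) (hρ : ρ (⟨αR, alpha_mem_Zα⟩ : Zα) = 0)
    (s : List Letter) (hs : s ∈ Syllables) :
    ∃ D : Matrix (Fin 8) (Fin 8) ℝ,
      (∀ (g : GL (Fin 3) ℂ) (B : Matrix (Fin 8) (Fin 8) ℝ),
        CRep ((Tg * g : GL (Fin 3) ℂ) : Matrix (Fin 3) (Fin 3) ℂ) B →
        CRep ((Tg * (wordProd s * g) : GL (Fin 3) ℂ) : Matrix (Fin 3) (Fin 3) ℂ) (D * B)) ∧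
      ∀ r v, InvV ρ r v → InvV ρ r (yR ^ 2 • (D *ᵥ v)) := by
  have cS : CRep (Sg : Matrix (Fin 3) (Fin 3) ℂ) Shat := CRep_S
  have cT : CRep (Tg : Matrix (Fin 3) (Fin 3) ℂ) That := CRep_T
  have cH : CRep (Hg : Matrix (Fin 3) (Fin 3) ℂ) Hhat := CRep_H
  have hTS : ∀ g : GL (Fin 3) ℂ, Tg * (Sg * g) = Sg * (Tg * g) := fun g => by
    rw [← mul_assoc, T_comm_S, mul_assoc]
  have iS : ∀ r v, InvV ρ r (yR ^ 2 • v) → InvV ρ r (yR ^ 2 • (Shat *ᵥ v)) := fun r v h => by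
    rw [← Matrix.mulVec_smul]; exact inv_S ρ hρ r _ h
  have iH := inv_TH ρ hρ
  have iHHH := inv_THHH ρ hρ
  simp only [Syllables, Set.mem_insert_iff, Set.mem_singleton_iff] at hs
  rcases hs with rfl | rfl | rfl | rfl | rfl | rfl
  · refine ⟨That * Hhat, fun g B h => ?_, fun r v h => ?_⟩
    · simp only [wordProd, List.map, List.prod_cons, List.prod_nil, Letter.g, mul_one, mul_assoc]
      exact cT.mul (cH.mul h)
    · simp only [← Matrix.mulVec_mulVec]; exact iH r v h
  · refine ⟨That * (Hhat * (Hhat * Hhat)), fun g B h => ?_, fun r v h => ?_⟩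
    · simp only [wordProd, List.map, List.prod_cons, List.prod_nil, Letter.g, mul_one, mul_assoc]
      exact cT.mul (cH.mul (cH.mul (cH.mul h)))
    · simp only [← Matrix.mulVec_mulVec]; exact iHHH r v h
  · refine ⟨Shat * (That * Hhat), fun g B h => ?_, fun r v h => ?_⟩
    · simp only [wordProd, List.map, List.prod_cons, List.prod_nil, Letter.g, mul_one, mul_assoc,
        hTS]
      exact cS.mul (cT.mul (cH.mul h))
    · simp only [← Matrix.mulVec_mulVec]; exact iS r _ (iH r v h)
  · refine ⟨Shat * (That * (Hhat * (Hhat * Hhat))), fun g B h => ?_, fun r v h => ?_⟩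
    · simp only [wordProd, List.map, List.prod_cons, List.prod_nil, Letter.g, mul_one, mul_assoc,
        hTS]
      exact cS.mul (cT.mul (cH.mul (cH.mul (cH.mul h))))
    · simp only [← Matrix.mulVec_mulVec]; exact iS r _ (iHHH r v h)
  · refine ⟨Shat * (Shat * (That * Hhat)), fun g B h => ?_, fun r v h => ?_⟩
    · simp only [wordProd, List.map, List.prod_cons, List.prod_nil, Letter.g, mul_one, mul_assoc,
        hTS]
      exact cS.mul (cS.mul (cT.mul (cH.mul h)))
    · simp only [← Matrix.mulVec_mulVec]; exact iS r _ (iS r _ (iH r v h))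
  · refine ⟨Shat * (Shat * (That * (Hhat * (Hhat * Hhat)))), fun g B h => ?_, fun r v h => ?_⟩
    · simp only [wordProd, List.map, List.prod_cons, List.prod_nil, Letter.g, mul_one, mul_assoc,
        hTS]
      exact cS.mul (cS.mul (cT.mul (cH.mul (cH.mul (cH.mul h)))))
    · simp only [← Matrix.mulVec_mulVec]; exact iS r _ (iS r _ (iHHH r v h))

lemma wordProd_append (a b : List Letter) : wordProd (a ++ b) = wordProd a * wordProd b := by
  simp [wordProd]

lemma word_inv (ρ : Zα →+* ZMod 3) (hρ : ρ (⟨αR, alpha_mem_Zα⟩ : Zα) = 0)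
    (rest : List (List Letter)) (h : ∀ s ∈ rest, s ∈ Syllables) :
    ∃ B : Matrix (Fin 8) (Fin 8) ℝ,
      CRep ((Tg * wordProd rest.flatten : GL (Fin 3) ℂ) : Matrix (Fin 3) (Fin 3) ℂ) B ∧
      ∀ r v, InvV ρ r (yR ^ 2 • (That *ᵥ v)) →
        InvV ρ r ((yR ^ 2) ^ (rest.length + 1) • (B *ᵥ v)) := by
  induction rest with
  | nil =>
    refine ⟨That, ?_, ?_⟩
    · simp only [List.flatten_nil, wordProd, List.map_nil, List.prod_nil, mul_one]
      exact CRep_T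
    · intro r v hv
      simpa using hv
  | cons s rest ih =>
    obtain ⟨B, hB, hB'⟩ := ih fun t ht => h t (List.mem_cons_of_mem _ ht)
    obtain ⟨D, hD, hD'⟩ := syllable_step ρ hρ s (h s List.mem_cons_self)
    refine ⟨D * B, ?_, ?_⟩
    · rw [List.flatten_cons, wordProd_append]
      exact hD _ _ hB
    · intro r v hv
      have := hD' r _ (hB' r v hv)
      rw [Matrix.mulVec_smul, smul_smul, ← pow_succ'] at this
      rw [← Matrix.mulVec_mulVec]
      exact this

/-! ### Residues of entries -/

/-- `a` lies in ℤ[α] and has residue `r`. -/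
def HasRes (ρ : Zα →+* ZMod 3) (a : ℝ) (r : ZMod 3) : Prop := ∃ b : Zα, (b : ℝ) = a ∧ ρ b = r

lemma HasRes.add {ρ : Zα →+* ZMod 3} {a b : ℝ} {r s : ZMod 3} (ha : HasRes ρ a r)
    (hb : HasRes ρ b s) : HasRes ρ (a + b) (r + s) := by
  obtain ⟨x, rfl, rfl⟩ := ha
  obtain ⟨z, rfl, rfl⟩ := hb
  exact ⟨x + z, by push_cast; rfl, map_add _ _ _⟩

lemma HasRes.mul {ρ : Zα →+* ZMod 3} {a b : ℝ} {r s : ZMod 3} (ha : HasRes ρ a r)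
    (hb : HasRes ρ b s) : HasRes ρ (a * b) (r * s) := by
  obtain ⟨x, rfl, rfl⟩ := ha
  obtain ⟨z, rfl, rfl⟩ := hb
  exact ⟨x * z, by push_cast; rfl, map_mul _ _ _⟩

lemma HasRes.pow {ρ : Zα →+* ZMod 3} {a : ℝ} {r : ZMod 3} (ha : HasRes ρ a r) (n : ℕ) :
    HasRes ρ (a ^ n) (r ^ n) := by
  obtain ⟨x, rfl, rfl⟩ := ha
  exact ⟨x ^ n, by push_cast; rfl, map_pow _ _ _⟩

lemma HasRes.coe (ρ : Zα →+* ZMod 3) (b : Zα) : HasRes ρ b (ρ b) := ⟨b, rfl, rfl⟩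

lemma HasRes.mem {ρ : Zα →+* ZMod 3} {a : ℝ} {r : ZMod 3} (ha : HasRes ρ a r) : a ∈ Zα := by
  obtain ⟨x, rfl, rfl⟩ := ha
  exact x.2

lemma HasRes.resEntry {ρ : Zα →+* ZMod 3} {k : ℕ} {a : ℝ} {r : ZMod 3}
    (ha : HasRes ρ (αR ^ k * a) r) : resEntry ρ k a = r := by
  have hm := ha.mem
  obtain ⟨x, hx, rfl⟩ := ha
  unfold _root_.resEntry
  rw [dif_pos hm]
  congr 1
  exact Subtype.ext hx.symm

lemma resEntry_coe (ρ : Zα →+* ZMod 3) (b : Zα) : resEntry ρ 0 (b : ℝ) = ρ b :=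
  HasRes.resEntry (by rw [pow_zero, one_mul]; exact HasRes.coe ρ b)

lemma hasRes_y (ρ : Zα →+* ZMod 3) (hρ : ρ (⟨αR, alpha_mem_Zα⟩ : Zα) = 0) : HasRes ρ yR 0 :=
  ⟨yZ, rfl, rho_y ρ hρ⟩

lemma hasRes_hf (ρ : Zα →+* ZMod 3) : HasRes ρ (1 / 2) 2 := ⟨hf, rfl, rho_hf ρ⟩

lemma hasRes_three_sub (ρ : Zα →+* ZMod 3) (hρ : ρ (⟨αR, alpha_mem_Zα⟩ : Zα) = 0) :
    HasRes ρ (3 - yR ^ 2) 0 := by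
  refine ⟨3 - yZ ^ 2, by push_cast [yZ_coe]; rw [Za_num.2.1], ?_⟩
  rw [map_sub, map_pow, rho_y ρ hρ, map_ofNat]
  rfl

/-- Entries of an invariant vector. -/
lemma InvV.entries {ρ : Zα →+* ZMod 3} (hρ : ρ (⟨αR, alpha_mem_Zα⟩ : Zα) = 0)
    {r : ZMod 3} {v : Fin 8 → ℝ} (h : InvV ρ r v) :
    HasRes ρ (v 0) 0 ∧ HasRes ρ (v 1) r ∧ HasRes ρ (v 2) r ∧ HasRes ρ (v 3) r ∧
    HasRes ρ (yR * v 4) 0 ∧ HasRes ρ (yR * v 5) r ∧ HasRes ρ (yR * v 6) r ∧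
    HasRes ρ (yR * v 7) r := by
  obtain ⟨w0, w1, w2, w3, w4, w5, w6, w7, hr, h0, h1, h2, h3, h4, h5, h6, h7⟩ := h
  have hY := rho_y ρ hρ
  rw [h0, h1, h2, h3, h4, h5, h6, h7]
  refine ⟨⟨yZ^2 * w0, by push_cast [yZ_coe]; rfl, ?_⟩,
    ⟨w2 + yZ^2 * w5, by push_cast [yZ_coe]; rfl, ?_⟩,
    ⟨-yZ^2 * w1 + w2 + -yZ^2 * w3 + yZ^2 * w5 + yZ^4 * w6, by push_cast [yZ_coe]; rfl, ?_⟩,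
    ⟨yZ^2 * w1 + (1 + -yZ^2) * w2 + yZ^2 * w3 + yZ^2 * w5 + yZ^4 * w7,
      by push_cast [yZ_coe]; rfl, ?_⟩,
    ⟨yZ^2 * w1, by push_cast [yZ_coe]; rfl, ?_⟩,
    ⟨w2, rfl, ?_⟩,
    ⟨yZ^2 * w1 + w2 + yZ^4 * w3, by push_cast [yZ_coe]; rfl, ?_⟩,
    ⟨-yZ^2 * w1 + (1 + yZ^4) * w2 + -yZ^4 * w3 + yZ^6 * w4, by push_cast [yZ_coe]; rfl, ?_⟩⟩ <;>
  simp [hY, hr]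

/-- Applying a Clifford operator to an invariant vector, `+` part. -/
lemma plus_part {ρ : Zα →+* ZMod 3} (hρ : ρ (⟨αR, alpha_mem_Zα⟩ : Zα) = 0)
    {r : ZMod 3} {v : Fin 8 → ℝ} (h : InvV ρ r v) {E : Matrix (Fin 8) (Fin 8) ℝ} (hE : Cl E)
    (i : Fin 8) (hi : i.val < 4) :
    HasRes ρ ((E *ᵥ v) i)
      ((resEntry ρ 0 (E i 1) + resEntry ρ 0 (E i 2) + resEntry ρ 0 (E i 3)) * r) := by
  obtain ⟨h0, h1, h2, h3, h4, h5, h6, h7⟩ := h.entries hρ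
  choose e he using fun k => hE i k
  have hs := hasRes_three_sub ρ hρ
  have e0 : E i 0 = e 0 := by rw [he]; simp [wt, hi]
  have e1 : E i 1 = e 1 := by rw [he]; simp [wt, hi]
  have e2 : E i 2 = e 2 := by rw [he]; simp [wt, hi]
  have e3 : E i 3 = e 3 := by rw [he]; simp [wt, hi]
  have e4 : E i 4 = yR * (3 - yR ^ 2) * e 4 := by rw [he]; simp [wt, hi]
  have e5 : E i 5 = yR * (3 - yR ^ 2) * e 5 := by rw [he]; simp [wt, hi]
  have e6 : E i 6 = yR * (3 - yR ^ 2) * e 6 := by rw [he]; simp [wt, hi]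
  have e7 : E i 7 = yR * (3 - yR ^ 2) * e 7 := by rw [he]; simp [wt, hi]
  rw [e1, e2, e3, resEntry_coe, resEntry_coe, resEntry_coe]
  have c := HasRes.coe ρ
  have key := (((((((c (e 0)).mul h0).add ((c (e 1)).mul h1)).add ((c (e 2)).mul h2)).add
    ((c (e 3)).mul h3)).add ((hs.mul (c (e 4))).mul h4)).add ((hs.mul (c (e 5))).mul h5)).add
    ((hs.mul (c (e 6))).mul h6) |>.add ((hs.mul (c (e 7))).mul h7)
  convert key using 1
  · simp only [Matrix.mulVec, dotProduct, Fin.sum_univ_eight, e0, e1, e2, e3, e4, e5, e6, e7]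
    ring
  · ring

/-- Applying a Clifford operator to an invariant vector, `-` part. -/
lemma minus_part {ρ : Zα →+* ZMod 3} (hρ : ρ (⟨αR, alpha_mem_Zα⟩ : Zα) = 0)
    {r : ZMod 3} {v : Fin 8 → ℝ} (h : InvV ρ r v) {E : Matrix (Fin 8) (Fin 8) ℝ} (hE : Cl E)
    (i : Fin 8) (hi : ¬ i.val < 4) :
    HasRes ρ (yR * (E *ᵥ v) i)
      ((resEntry ρ 0 (E i 5) + resEntry ρ 0 (E i 6) + resEntry ρ 0 (E i 7)) * r) := by
  obtain ⟨h0, h1, h2, h3, h4, h5, h6, h7⟩ := h.entries hρ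
  choose e he using fun k => hE i k
  have hs := (((hasRes_y ρ hρ).pow 2).mul (hasRes_three_sub ρ hρ))
  have e0 : E i 0 = yR * (3 - yR ^ 2) * e 0 := by rw [he]; simp [wt, hi]
  have e1 : E i 1 = yR * (3 - yR ^ 2) * e 1 := by rw [he]; simp [wt, hi]
  have e2 : E i 2 = yR * (3 - yR ^ 2) * e 2 := by rw [he]; simp [wt, hi]
  have e3 : E i 3 = yR * (3 - yR ^ 2) * e 3 := by rw [he]; simp [wt, hi]
  have e4 : E i 4 = e 4 := by rw [he]; simp [wt, hi]
  have e5 : E i 5 = e 5 := by rw [he]; simp [wt, hi]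
  have e6 : E i 6 = e 6 := by rw [he]; simp [wt, hi]
  have e7 : E i 7 = e 7 := by rw [he]; simp [wt, hi]
  rw [e5, e6, e7, resEntry_coe, resEntry_coe, resEntry_coe]
  have c := HasRes.coe ρ
  have key := (((((((hs.mul (c (e 0))).mul h0).add ((hs.mul (c (e 1))).mul h1)).add
    ((hs.mul (c (e 2))).mul h2)).add ((hs.mul (c (e 3))).mul h3)).add ((c (e 4)).mul h4)).add
    ((c (e 5)).mul h5)).add ((c (e 6)).mul h6) |>.add ((c (e 7)).mul h7)
  convert key using 1
  · simp only [Matrix.mulVec, dotProduct, Fin.sum_univ_eight, e0, e1, e2, e3, e4, e5, e6, e7]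
    ring
  · ring

/-- A column of a Clifford operator gives a base vector. -/
lemma col_base {ρ : Zα →+* ZMod 3} (hρ : ρ (⟨αR, alpha_mem_Zα⟩ : Zα) = 0)
    {C : Matrix (Fin 8) (Fin 8) ℝ} (hC : Cl C) (j : Fin 8) (hj : j.val < 4) :
    InvV ρ (2 * (resEntry ρ 0 (C 1 j) + resEntry ρ 0 (C 2 j) + resEntry ρ 0 (C 3 j)))
      (yR ^ 2 • (That *ᵥ fun k => C k j)) := by
  choose e he using fun k => hC k j
  have e0 : C 0 j = e 0 := by rw [he]; simp [wt, hj]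
  have e1 : C 1 j = e 1 := by rw [he]; simp [wt, hj]
  have e2 : C 2 j = e 2 := by rw [he]; simp [wt, hj]
  have e3 : C 3 j = e 3 := by rw [he]; simp [wt, hj]
  have e4 : C 4 j = yR * (3 - yR ^ 2) * e 4 := by rw [he]; simp [wt, hj]
  have e5 : C 5 j = yR * (3 - yR ^ 2) * e 5 := by rw [he]; simp [wt, hj]
  have e6 : C 6 j = yR * (3 - yR ^ 2) * e 6 := by rw [he]; simp [wt, hj]
  have e7 : C 7 j = yR * (3 - yR ^ 2) * e 7 := by rw [he]; simp [wt, hj]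
  rw [e1, e2, e3, resEntry_coe, resEntry_coe, resEntry_coe]
  exact inv_base ρ hρ _ (e 0) (e 1) (e 2) (e 3) (e 4) (e 5) (e 6) (e 7)
    e0 e1 e2 e3 e4 e5 e6 e7

/-- The theorem for `U = M · (T s₁ ⋯ s_k) · c`. -/
lemma residues_aux (ρ : Zα →+* ZMod 3) (hρ : ρ (⟨αR, alpha_mem_Zα⟩ : Zα) = 0)
    (rest : List (List Letter)) (hrest : ∀ s ∈ rest, s ∈ Syllables)
    (M c U : GL (Fin 3) ℂ) (hM : M ∈ Cliff) (hc : c ∈ Cliff)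
    (hU : U = M * (Tg * wordProd rest.flatten) * c) (n : ℕ) (hn : n = rest.length + 1) :
    (∀ i j : Fin 4, αR ^ (2 * n) * blockPP (adj (U : Matrix (Fin 3) (Fin 3) ℂ)) i j ∈ Zα) ∧
    (∀ i j : Fin 4, αR ^ (2 * n + 1) * blockMP (adj (U : Matrix (Fin 3) (Fin 3) ℂ)) i j ∈ Zα) ∧
    resMat ρ (2 * n) (blockPP (adj (U : Matrix (Fin 3) (Fin 3) ℂ))) =
      resMat ρ 0 (blockPP (adj (M : Matrix (Fin 3) (Fin 3) ℂ))) * J2 *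
      resMat ρ 0 (blockPP (adj (c : Matrix (Fin 3) (Fin 3) ℂ))) ∧
    resMat ρ (2 * n + 1) (blockMP (adj (U : Matrix (Fin 3) (Fin 3) ℂ))) =
      resMat ρ 0 (blockMM (adj (M : Matrix (Fin 3) (Fin 3) ℂ))) * J1 *
      resMat ρ 0 (blockPP (adj (c : Matrix (Fin 3) (Fin 3) ℂ))) := by
  obtain ⟨E, hE, hE'⟩ := Cliff_rep M hM
  obtain ⟨C, hC, hC'⟩ := Cliff_rep c hc
  obtain ⟨B, hB, hB'⟩ := word_inv ρ hρ rest hrest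
  have hUrep : CRep (U : Matrix (Fin 3) (Fin 3) ℂ) (E * B * C) := by
    rw [hU]; exact (hE.mul hB).mul hC
  rw [hUrep.adj_eq, hE.adj_eq, hC.adj_eq]
  have hcol : ∀ i j, (yR ^ 2) ^ n * (E * B * C) i j =
      (E *ᵥ ((yR ^ 2) ^ n • (B *ᵥ fun k => C k j))) i := by
    intro i j
    rw [Matrix.mulVec_smul, Matrix.mulVec_mulVec, Pi.smul_apply, smul_eq_mul]
    rfl
  have hinv : ∀ j : Fin 8, j.val < 4 →
      InvV ρ (2 * (resEntry ρ 0 (C 1 j) + resEntry ρ 0 (C 2 j) + resEntry ρ 0 (C 3 j)))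
      ((yR ^ 2) ^ n • (B *ᵥ fun k => C k j)) := by
    intro j hj
    rw [hn]
    exact hB' _ _ (col_base hρ hC' j hj)
  have hα : αR = 1 / 2 * yR := by rw [yR]; ring
  have h4 : HasRes ρ ((1 / 2) ^ (2 * n)) 1 := by
    have := (hasRes_hf ρ).pow (2 * n)
    rwa [pow_mul (2 : ZMod 3), show (2 : ZMod 3) ^ 2 = 1 from rfl, one_pow] at this
  have hPP : ∀ i j : Fin 4, HasRes ρ (αR ^ (2 * n) * blockPP (E * B * C) i j)
      ((resMat ρ 0 (blockPP E) * J2 * resMat ρ 0 (blockPP C)) i j) := by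
    intro i j
    have key := h4.mul (plus_part hρ (hinv ⟨j.val, by omega⟩ j.2) hE' ⟨i.val, by omega⟩ i.2)
    rw [← hcol] at key
    convert key using 1
    · rw [blockPP, Matrix.of_apply, hα, mul_pow, pow_mul yR]; ring
    · simp only [Matrix.mul_apply, Fin.sum_univ_four, J2, resMat, blockPP, Matrix.of_apply]
      simp
      ring
  have hMP : ∀ i j : Fin 4, HasRes ρ (αR ^ (2 * n + 1) * blockMP (E * B * C) i j)
      ((resMat ρ 0 (blockMM E) * J1 * resMat ρ 0 (blockPP C)) i j) := by
    intro i j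
    have key := ((hasRes_hf ρ).mul h4).mul (minus_part hρ (hinv ⟨j.val, by omega⟩ j.2) hE'
      ⟨i.val + 4, by omega⟩ (by simp))
    rw [← hcol] at key
    convert key using 1
    · rw [blockMP, Matrix.of_apply, hα, mul_pow, pow_succ, pow_succ yR, pow_mul yR]; ring
    · simp only [Matrix.mul_apply, Fin.sum_univ_four, J1, resMat, blockMM, blockPP,
        Matrix.of_apply]
      have h22 : ∀ x z : ZMod 3, 2 * 1 * (x * (2 * z)) = x * z := by decide
      rw [h22]
      simp
      ring
  refine ⟨fun i j => (hPP i j).mem, fun i j => (hMP i j).mem, ?_, ?_⟩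
  · ext i j
    exact (hPP i j).resEntry
  · ext i j
    exact (hMP i j).resEntry

lemma syllable_split (s : List Letter) (hs : s ∈ Syllables) :
    wordProd s = wordProd s.dropLast * Tg ∧ wordProd s.dropLast ∈ Cliff := by
  have hHm : Hg ∈ Cliff := Subgroup.subset_closure (by simp)
  have hSm : Sg ∈ Cliff := Subgroup.subset_closure (by simp)
  simp only [Syllables, Set.mem_insert_iff, Set.mem_singleton_iff] at hs
  rcases hs with rfl | rfl | rfl | rfl | rfl | rfl <;>
    simp only [wordProd, List.dropLast, List.map, List.prod_cons, List.prod_nil, Letter.g,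
      mul_one, mul_assoc, true_and]
  · exact hHm
  · exact mul_mem hHm (mul_mem hHm hHm)
  · exact mul_mem hSm hHm
  · exact mul_mem hSm (mul_mem hHm (mul_mem hHm hHm))
  · exact mul_mem hSm (mul_mem hSm hHm)
  · exact mul_mem hSm (mul_mem hSm (mul_mem hHm (mul_mem hHm hHm)))

/-- Let U be the product of a canonical form with T-count n ≥ 1,
whose leftmost T-gate block has Clifford prefix M ∈ ℒℳ, and whose final Clifford
element is c ∈ 𝒞. Then ρ_{2n}(Û₊₊) = ρ₀(M̂₊₊)·J₂·ρ₀(ĉ₊₊) and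
ρ_{2n+1}(Û₋₊) = ρ₀(M̂₋₋)·J₁·ρ₀(ĉ₊₊), where ρ : ℤ[α] → ℤ/3ℤ is the residue map
(the quotient map by the ideal (α) followed by the isomorphism ℤ[α]/(α) ≅ ℤ/3ℤ;
equivalently, any ring homomorphism ℤ[α] → ℤ/3ℤ sending α to 0). -/
theorem residues_of_canonical_form
    (ρ : Zα →+* ZMod 3) (hρ : ρ (⟨αR, alpha_mem_Zα⟩ : Zα) = 0)
    (p : List Letter) (ss : List (List Letter)) (c : GL (Fin 3) ℂ)
    (hp : p ∈ Prefixes) (hss : ∀ s ∈ ss, s ∈ Syllables) (hc : c ∈ Cliff)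
    (U : GL (Fin 3) ℂ) (hU : U = wordProd (p ++ ss.flatten) * c)
    (n : ℕ) (hn : n = TCount p ss) (hn1 : 1 ≤ n)
    (M : GL (Fin 3) ℂ) (hM : M ∈ LMset)
    (hMpre : (p ≠ [] ∧ M = wordProd p.dropLast) ∨
      (p = [] ∧ ∃ s rest, ss = s :: rest ∧ M = wordProd s.dropLast)) :
    (∀ i j : Fin 4, αR ^ (2 * n) * blockPP (adj (U : Matrix (Fin 3) (Fin 3) ℂ)) i j ∈ Zα) ∧
    (∀ i j : Fin 4, αR ^ (2 * n + 1) * blockMP (adj (U : Matrix (Fin 3) (Fin 3) ℂ)) i j ∈ Zα) ∧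
    resMat ρ (2 * n) (blockPP (adj (U : Matrix (Fin 3) (Fin 3) ℂ))) =
      resMat ρ 0 (blockPP (adj (M : Matrix (Fin 3) (Fin 3) ℂ))) * J2 *
      resMat ρ 0 (blockPP (adj (c : Matrix (Fin 3) (Fin 3) ℂ))) ∧
    resMat ρ (2 * n + 1) (blockMP (adj (U : Matrix (Fin 3) (Fin 3) ℂ))) =
      resMat ρ 0 (blockMM (adj (M : Matrix (Fin 3) (Fin 3) ℂ))) * J1 *
      resMat ρ 0 (blockPP (adj (c : Matrix (Fin 3) (Fin 3) ℂ))) := by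
  have hHm : Hg ∈ Cliff := Subgroup.subset_closure (by simp)
  rcases hMpre with ⟨hp0, rfl⟩ | ⟨rfl, s, rest, rfl, rfl⟩
  · have hn' : n = ss.length + 1 := by rw [hn, TCount, if_neg hp0]
    simp only [Prefixes, Set.mem_insert_iff, Set.mem_singleton_iff] at hp
    rcases hp with rfl | rfl | rfl
    · exact absurd rfl hp0
    · refine residues_aux ρ hρ ss hss _ c U ?_ hc ?_ n hn'
      · simp only [wordProd, List.dropLast, List.map, List.prod_nil]
        exact one_mem _
      · rw [hU, wordProd_append]
        simp only [wordProd, List.dropLast, List.map, List.prod_cons, List.prod_nil, Letter.g,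
          mul_one, one_mul]
    · refine residues_aux ρ hρ ss hss _ c U ?_ hc ?_ n hn'
      · simp only [wordProd, List.dropLast, List.map, List.prod_cons, List.prod_nil, Letter.g,
          mul_one]
        exact mul_mem hHm hHm
      · rw [hU, wordProd_append]
        simp only [wordProd, List.dropLast, List.map, List.prod_cons, List.prod_nil, Letter.g,
          mul_one, mul_assoc]
  · obtain ⟨h1, h2⟩ := syllable_split s (hss s List.mem_cons_self)
    refine residues_aux ρ hρ rest (fun t ht => hss t (List.mem_cons_of_mem _ ht)) _ c U h2 hc ?_ n ?_
    · rw [hU, List.nil_append, List.flatten_cons, wordProd_append, h1]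
      simp only [mul_assoc]
    · rw [hn, TCount, if_pos rfl, List.length_cons]

end
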